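/- Let 𝓕 be a family of graphs each of chromatic number 2 (bipartite) that contains no forest, and fix ε > 0, β ≥ 1, α ≥ 32β. There exist a constant c > 0 and d₀ such that for all d ≥ d₀ the following holds: if G is a d-regular graph and 𝒢 is a graph on α·d vertices with Δ(𝒢) ≤ β·δ(𝒢), δ(𝒢) > d^ε, and hom*(F, 𝒢) = 0 for every F ∈ 𝓕, then there exists a spanning 𝓕-free subgraph H ⊆ G with minimum degree δ(H) ≥ c·δ(𝒢) (indeed δ(H) ≥ δ(𝒢)/(4α)). -/

import Mathlib

open SimpleGraph

def ContainsCopy {α β : Type*} (F : SimpleGraph α) (H : SimpleGraph β) : Prop :=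
  ∃ f : F →g H, Function.Injective f

abbrev GraphFamily := Set (Σ n : ℕ, SimpleGraph (Fin n))

def FamFree {β : Type*} (H : SimpleGraph β) (𝓕 : GraphFamily) : Prop :=
  ∀ F ∈ 𝓕, ¬ ContainsCopy F.2 H

noncomputable def extremalNum (n : ℕ) (𝓕 : GraphFamily) : ℕ :=
  sSup {k | ∃ H : SimpleGraph (Fin n), FamFree H 𝓕 ∧ k = H.edgeSet.ncard}

def LocallyInjective {α β : Type*} {F : SimpleGraph α} {G : SimpleGraph β}
    (φ : F →g G) : Prop :=
  ∀ v : α, Set.InjOn φ (F.neighborSet v)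

def NoLocInjHom {α β : Type*} (F : SimpleGraph α) (G : SimpleGraph β) : Prop :=
  ¬ ∃ φ : F →g G, LocallyInjective φ

def ClosedFamily (𝓕 : GraphFamily) : Prop :=
  ∀ (W : Type) [Fintype W] (G : SimpleGraph W),
    (∀ F ∈ 𝓕, NoLocInjHom F.2 G) ↔ FamFree G 𝓕

noncomputable def deg {β : Type*} (H : SimpleGraph β) (v : β) : ℕ :=
  (H.neighborSet v).ncard

noncomputable def minDeg {β : Type*} [Fintype β] (H : SimpleGraph β) : ℕ :=
  ⨅ v, deg H v

noncomputable def maxDeg {β : Type*} [Fintype β] (H : SimpleGraph β) : ℕ :=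
  ⨆ v, deg H v

def RegularDeg {β : Type*} (G : SimpleGraph β) (d : ℕ) : Prop :=
  ∀ v, deg G v = d

noncomputable def Bad {α γ : Type*} (G : SimpleGraph α) (χ : α → γ) (v : α) : ℕ :=
  {u | u ∈ G.neighborSet v ∧ ∃ v', v' ∈ G.neighborSet u ∧ v' ≠ v ∧ χ v' = χ v}.ncard

section Prob
open Finset
open scoped Classical

variable {V P : Type} [Fintype V] [Fintype P]

noncomputable def Ex (f : (V → P) → ℝ) : ℝ := (∑ c, f c) / (Fintype.card (V → P) : ℝ)

noncomputable def Pr (E : (V → P) → Prop) : ℝ := Ex (fun c => if E c then (1:ℝ) else 0)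

lemma Ex_mono {f g : (V → P) → ℝ} (h : ∀ c, f c ≤ g c) : Ex f ≤ Ex g := by
  unfold Ex
  exact div_le_div_of_nonneg_right (Finset.sum_le_sum fun c _ => h c) (by positivity)

lemma Pr_mono {E F : (V → P) → Prop} (h : ∀ c, E c → F c) : Pr E ≤ Pr F := by
  unfold Pr
  apply Ex_mono
  intro c
  by_cases h1 : E c
  · simp [h1, h c h1]
  · simp only [h1, if_false]; split_ifs <;> norm_num

lemma Pr_or (E F : (V → P) → Prop) : Pr (fun c => E c ∨ F c) ≤ Pr E + Pr F := by
  unfold Pr Ex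
  rw [← add_div, ← Finset.sum_add_distrib]
  refine div_le_div_of_nonneg_right (Finset.sum_le_sum ?_) (by positivity)
  intro c _
  by_cases h1 : E c <;> by_cases h2 : F c <;> simp [h1, h2]

lemma Pr_nonneg (E : (V → P) → Prop) : 0 ≤ Pr E := by
  unfold Pr Ex
  refine div_nonneg (Finset.sum_nonneg ?_) (by positivity)
  intro c _
  split_ifs <;> norm_num

lemma Pr_false : Pr (fun _ : V → P => False) = 0 := by
  simp [Pr, Ex]

lemma Pr_exists {ι : Type} (s : Finset ι) (E : ι → (V → P) → Prop) (p : ℝ)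
    (h : ∀ i ∈ s, Pr (E i) ≤ p) : Pr (fun c => ∃ i ∈ s, E i c) ≤ s.card * p := by
  induction s using Finset.induction_on with
  | empty => simp [Pr_false]
  | insert a s ha ih =>
    have h1 : Pr (fun c => ∃ i ∈ insert a s, E i c) ≤ Pr (E a) + Pr (fun c => ∃ i ∈ s, E i c) := by
      refine le_trans (Pr_mono ?_) (Pr_or _ _)
      intro c hc
      simpa using hc
    rw [Finset.card_insert_of_notMem ha]
    push_cast
    have h2 := ih (fun i hi => h i (Finset.mem_insert_of_mem hi))
    have h3 := h a (Finset.mem_insert_self _ _)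
    linarith

lemma Pr_lt_one_exists [Nonempty P] {E : (V → P) → Prop} (h : Pr E < 1) : ∃ c, ¬ E c := by
  by_contra hcon
  push Not at hcon
  have : Pr E = 1 := by
    unfold Pr Ex
    simp only [hcon, if_true]
    simp only [sum_const, nsmul_eq_mul, mul_one, card_univ]
    apply div_self
    have : 0 < Fintype.card (V → P) := Fintype.card_pos
    positivity
  linarith

lemma Markov {f : (V → P) → ℝ} {a : ℝ} (ha : 0 < a) (hf : ∀ c, 0 ≤ f c) :
    Pr (fun c => a ≤ f c) ≤ Ex f / a := by
  have : Ex f / a = Ex (fun c => f c / a) := by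
    unfold Ex
    rw [← Finset.sum_div]
    ring
  rw [this]
  unfold Pr
  apply Ex_mono
  intro c
  split_ifs with h
  · rw [le_div_iff₀ ha]; linarith
  · exact div_nonneg (hf c) ha.le

noncomputable def mixEquiv (A : Finset V) : ((V → P) × (V → P)) ≃ ((V → P) × (V → P)) where
  toFun x := (A.piecewise x.2 x.1, A.piecewise x.1 x.2)
  invFun x := (A.piecewise x.2 x.1, A.piecewise x.1 x.2)
  left_inv x := by
    ext i <;> by_cases h : i ∈ A <;> simp [h]
  right_inv x := by
    ext i <;> by_cases h : i ∈ A <;> simp [h]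

lemma mix_sum (A : Finset V) (f : (V → P) → ℝ) :
    ∑ c, ∑ c', f (A.piecewise c' c) = Fintype.card (V → P) * ∑ c, f c := by
  rw [← Fintype.sum_prod_type' (f := fun c c' => f (A.piecewise c' c))]
  have h := Fintype.sum_equiv (mixEquiv A) (fun x : (V → P) × (V → P) => f (A.piecewise x.2 x.1))
    (fun x : (V → P) × (V → P) => f x.1) (fun x => rfl)
  refine h.trans ?_
  rw [Fintype.sum_prod_type_right]
  simp

lemma Ex_mix (A : Finset V) (f : (V → P) → ℝ) :
    Ex f = Ex (fun c => Ex (fun c' => f (A.piecewise c' c))) := by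
  unfold Ex
  rw [← Finset.sum_div, mix_sum]
  by_cases h : (Fintype.card (V → P) : ℝ) = 0
  · rw [h]; simp
  · field_simp

lemma Ex_const [Nonempty P] (a : ℝ) : Ex (fun _ : V → P => a) = a := by
  unfold Ex
  have : 0 < Fintype.card (V → P) := Fintype.card_pos
  simp only [sum_const, nsmul_eq_mul, card_univ]
  field_simp

lemma Pr_cond [Nonempty P] (A : Finset V) (E : (V → P) → Prop) (p : ℝ)
    (h : ∀ c, Pr (fun c' => E (A.piecewise c' c)) ≤ p) : Pr E ≤ p := by
  unfold Pr
  rw [Ex_mix A]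
  refine le_trans (Ex_mono (g := fun _ => p) ?_) (Ex_const p).le
  intro c
  exact h c

def DepOn (A : Finset V) {β : Type} (f : (V → P) → β) : Prop :=
  ∀ c c', (∀ i ∈ A, c i = c' i) → f c = f c'

lemma Ex_mul_const (f : (V → P) → ℝ) (a : ℝ) : Ex (fun c => f c * a) = Ex f * a := by
  unfold Ex
  rw [← Finset.sum_mul]; ring

lemma Ex_indep (A B : Finset V) (hAB : Disjoint A B) (f g : (V → P) → ℝ)
    (hf : DepOn A f) (hg : DepOn B g) : Ex (fun c => f c * g c) = Ex f * Ex g := by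
  rw [Ex_mix A]
  have : ∀ c c' : V → P, f (A.piecewise c' c) * g (A.piecewise c' c) = f c' * g c := by
    intro c c'
    congr 1
    · apply hf; intro i hi; simp [hi]
    · apply hg; intro i hi
      have : i ∉ A := fun h => (Finset.disjoint_left.mp hAB h hi)
      simp [this]
  simp only [this, Ex_mul_const]
  have : (fun c : V → P => Ex f * g c) = (fun c => g c * Ex f) := by ext; ring
  rw [this, Ex_mul_const]; ring

lemma Ex_prod [Nonempty P] (s : Finset V) (g : V → P → ℝ) :
    Ex (fun c => ∏ u ∈ s, g u (c u)) = ∏ u ∈ s, ((∑ y, g u y) / Fintype.card P) := by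
  have hP : (Fintype.card P : ℝ) ≠ 0 := by
    have : 0 < Fintype.card P := Fintype.card_pos
    positivity
  have h1 : ∀ c : V → P, ∏ u ∈ s, g u (c u) = ∏ u, (if u ∈ s then g u (c u) else 1) := by
    intro c
    rw [Finset.prod_ite_mem]; simp
  have h2 := Finset.prod_univ_sum (fun _ : V => (univ : Finset P))
    (fun u y => if u ∈ s then g u y else (1:ℝ))
  unfold Ex
  simp only [h1]
  rw [Fintype.piFinset_univ] at h2
  rw [← h2]
  rw [Fintype.card_fun, Nat.cast_pow, ← Finset.card_univ (α := V), ← Finset.prod_const, ← Finset.prod_div_distrib]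
  rw [← Finset.prod_subset (Finset.subset_univ s)]
  · apply Finset.prod_congr rfl
    intro u hu
    simp [hu]
  · intro u _ hu
    simp [hu, hP]

/-- upper tail -/
lemma chernoff_upper [Nonempty P] (s : Finset V) (w : V → ℝ) (hw0 : ∀ u ∈ s, 0 ≤ w u)
    (hw1 : ∀ u ∈ s, w u ≤ 1) (Y : V → Finset P) (μ t : ℝ) (ht : 0 < t)
    (hμ : ∑ u ∈ s, w u * ((Y u).card / Fintype.card P) ≤ μ) :
    Pr (fun c : V → P => (1 + 2 * t) * μ ≤ ∑ u ∈ s, if c u ∈ Y u then w u else 0)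
      ≤ Real.exp (-(t ^ 2 / (1 + t) * μ)) := by
  have hP : (0:ℝ) < Fintype.card P := by exact_mod_cast Fintype.card_pos
  have ht1 : 0 < 1 + t := by linarith
  have hμ0 : 0 ≤ μ := le_trans (Finset.sum_nonneg fun u hu => mul_nonneg (hw0 u hu) (by positivity)) hμ
  set f : (V → P) → ℝ := fun c => ∏ u ∈ s, (1 + t) ^ (if c u ∈ Y u then w u else (0:ℝ)) with hfdef
  have hf : ∀ c, f c = (1 + t) ^ (∑ u ∈ s, if c u ∈ Y u then w u else (0:ℝ)) := by
    intro c
    rw [hfdef, Real.rpow_sum_of_pos ht1]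
  have hE : Ex f ≤ Real.exp (t * μ) := by
    rw [hfdef, Ex_prod s (fun u y => (1 + t) ^ (if y ∈ Y u then w u else (0:ℝ)))]
    calc _ ≤ ∏ u ∈ s, Real.exp (t * (w u * ((Y u).card / Fintype.card P))) := by
          apply Finset.prod_le_prod
          · intro u _
            apply div_nonneg _ hP.le
            apply Finset.sum_nonneg; intro y _; positivity
          · intro u hu
            refine le_trans ?_ (Real.add_one_le_exp _)
            rw [div_le_iff₀ hP]
            calc ∑ y, (1 + t) ^ (if y ∈ Y u then w u else (0:ℝ))
                ≤ ∑ y, (1 + if y ∈ Y u then w u * t else 0) := by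
                  apply Finset.sum_le_sum
                  intro y _
                  split_ifs
                  · exact rpow_one_add_le_one_add_mul_self (by linarith) (hw0 u hu) (hw1 u hu)
                  · simp
              _ = Fintype.card P + (Y u).card * (w u * t) := by
                  rw [Finset.sum_add_distrib, Finset.sum_ite_mem]
                  simp
              _ = _ := by field_simp; ring
      _ = Real.exp (t * ∑ u ∈ s, w u * ((Y u).card / Fintype.card P)) := by
          rw [← Real.exp_sum, Finset.mul_sum]
      _ ≤ _ := by
          apply Real.exp_le_exp.mpr
          gcongr
  have hM := Markov (f := f) (a := (1 + t) ^ ((1 + 2 * t) * μ)) (by positivity)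
    (fun c => by rw [hf]; positivity)
  refine le_trans (Pr_mono ?_) (hM.trans ?_)
  · intro c hc
    rw [hf]
    exact Real.rpow_le_rpow_of_exponent_le (by linarith) hc
  · have hlog : t / (1 + t) ≤ Real.log (1 + t) := by
      have := Real.one_sub_inv_le_log_of_pos ht1
      refine le_trans (le_of_eq ?_) this
      field_simp; ring
    rw [div_le_iff₀ (by positivity), Real.rpow_def_of_pos ht1, ← Real.exp_add]
    refine hE.trans (Real.exp_le_exp.mpr ?_)
    have : t / (1 + t) * ((1 + 2 * t) * μ) ≤ Real.log (1 + t) * ((1 + 2 * t) * μ) := by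
      gcongr
    have e : -(t ^ 2 / (1 + t) * μ) + t / (1 + t) * ((1 + 2 * t) * μ) = t * μ := by
      field_simp; ring
    linarith

/-- lower tail -/
lemma chernoff_lower [Nonempty P] (s : Finset V) (Y : Finset P) (μ t : ℝ) (ht : 0 < t) (ht1 : t < 1/2)
    (hμ0 : 0 ≤ μ) (hμ : μ ≤ s.card * (Y.card / Fintype.card P)) :
    Pr (fun c : V → P => ((s.filter (fun u => c u ∈ Y)).card : ℝ) ≤ (1 - 2 * t) * μ)
      ≤ Real.exp (-(t ^ 2 / (1 + t) * μ)) := by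
  have hP : (0:ℝ) < Fintype.card P := by exact_mod_cast Fintype.card_pos
  have ht2 : 0 < 1 - t := by linarith
  have hY : (Y.card : ℝ) ≤ Fintype.card P := by exact_mod_cast Finset.card_le_univ Y
  set f : (V → P) → ℝ := fun c => ∏ u ∈ s, (if c u ∈ Y then (1 - t) else (1:ℝ)) with hfdef
  have hf : ∀ c, f c = (1 - t) ^ ((s.filter (fun u => c u ∈ Y)).card : ℝ) := by
    intro c
    rw [hfdef, Real.rpow_natCast]
    simp only
    rw [Finset.prod_ite]; simp
  have hE : Ex f ≤ Real.exp (-(t * μ)) := by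
    rw [hfdef, Ex_prod s (fun u y => (if y ∈ Y then (1 - t) else (1:ℝ)))]
    calc _ ≤ ∏ u ∈ s, Real.exp (-(t * (Y.card / Fintype.card P))) := by
          apply Finset.prod_le_prod
          · intro u _
            apply div_nonneg _ hP.le
            apply Finset.sum_nonneg; intro y _; split_ifs <;> linarith
          · intro u hu
            refine le_trans ?_ (Real.add_one_le_exp _)
            rw [div_le_iff₀ hP]
            have : ∀ y, (if y ∈ Y then (1 - t) else (1:ℝ)) = 1 + if y ∈ Y then -t else 0 := by
              intro y; split_ifs <;> ring
            simp only [this]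
            rw [Finset.sum_add_distrib, Finset.sum_ite_mem]
            simp
            field_simp; linarith
      _ = Real.exp (-(t * (s.card * (Y.card / Fintype.card P)))) := by
          rw [Finset.prod_const, ← Real.exp_nat_mul]; congr 1; ring
      _ ≤ _ := by
          apply Real.exp_le_exp.mpr
          have := mul_le_mul_of_nonneg_left hμ ht.le
          linarith
  have hM := Markov (f := f) (a := (1 - t) ^ ((1 - 2 * t) * μ)) (by positivity)
    (fun c => by rw [hf]; positivity)
  refine le_trans (Pr_mono ?_) (hM.trans ?_)
  · intro c hc
    rw [hf]
    exact Real.rpow_le_rpow_of_exponent_ge ht2 (by linarith) hc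
  · have hlog : -(t / (1 - t)) ≤ Real.log (1 - t) := by
      have := Real.one_sub_inv_le_log_of_pos ht2
      refine le_trans (le_of_eq ?_) this
      field_simp; ring
    rw [div_le_iff₀ (by positivity), Real.rpow_def_of_pos ht2, ← Real.exp_add]
    refine hE.trans (Real.exp_le_exp.mpr ?_)
    have h3 : -(t / (1 - t)) * ((1 - 2 * t) * μ) ≤ Real.log (1 - t) * ((1 - 2 * t) * μ) := by
      have : 0 ≤ (1 - 2 * t) * μ := mul_nonneg (by linarith) hμ0
      gcongr
    have e : -(t ^ 2 / (1 - t) * μ) + -(t / (1 - t)) * ((1 - 2 * t) * μ) = -(t * μ) := by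
      field_simp; ring
    have h4 : t ^ 2 / (1 + t) * μ ≤ t ^ 2 / (1 - t) * μ := by
      gcongr; linarith
    linarith

end Prob

section Lll
open Finset
open scoped Classical

variable {V P : Type} [Fintype V] [Fintype P]

lemma lll_step (A : V → (V → P) → Prop) (Γ : V → Finset V) (p : ℝ) (Δ : ℕ) (hp : 0 ≤ p)
    (hΓ : ∀ v, (Γ v).card ≤ Δ) (hpΔ : 4 * p * Δ ≤ 1)
    (hind : ∀ v, ∀ T : Finset V, Disjoint T (Γ v) →
      Pr (fun c => A v c ∧ ∀ w ∈ T, ¬ A w c) ≤ p * Pr (fun c => ∀ w ∈ T, ¬ A w c)) :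
    ∀ n : ℕ, ∀ S : Finset V, S.card = n → ∀ v,
      Pr (fun c => A v c ∧ ∀ w ∈ S, ¬ A w c) ≤ 2 * p * Pr (fun c => ∀ w ∈ S, ¬ A w c) := by
  intro n
  induction n using Nat.strong_induction_on with
  | _ n ih =>
  intro S hS v
  set S2 := S \ Γ v with hS2
  have hb : Pr (fun c => A v c ∧ ∀ w ∈ S, ¬ A w c) ≤ p * Pr (fun c => ∀ w ∈ S2, ¬ A w c) := by
    refine le_trans (Pr_mono ?_) (hind v S2 Finset.sdiff_disjoint)
    rintro c ⟨h1, h2⟩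
    exact ⟨h1, fun w hw => h2 w (Finset.mem_sdiff.mp hw).1⟩
  have hn := Pr_nonneg (fun c : V → P => ∀ w ∈ S, ¬ A w c)
  have hn2 := Pr_nonneg (fun c : V → P => ∀ w ∈ S2, ¬ A w c)
  by_cases hE : S ∩ Γ v = ∅
  · have : S2 = S := by
      rw [hS2, Finset.sdiff_eq_self_iff_disjoint, Finset.disjoint_iff_inter_eq_empty]; exact hE
    rw [this] at hb
    nlinarith
  · have hcard : S2.card < n := by
      rw [← hS]
      apply Finset.card_lt_card
      obtain ⟨x, hx⟩ := Finset.nonempty_iff_ne_empty.mpr hE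
      rw [Finset.mem_inter] at hx
      refine ⟨Finset.sdiff_subset, fun h => ?_⟩
      have := h hx.1
      rw [hS2, Finset.mem_sdiff] at this
      exact this.2 hx.2
    have h1 : Pr (fun c => ∀ w ∈ S2, ¬ A w c) ≤ Pr (fun c => ∀ w ∈ S, ¬ A w c) +
        Pr (fun c => ∃ u ∈ Γ v, A u c ∧ ∀ w ∈ S2, ¬ A w c) := by
      refine le_trans (Pr_mono ?_) (Pr_or _ _)
      intro c hc
      by_cases h : ∀ w ∈ S, ¬ A w c
      · exact Or.inl h
      · right
        push Not at h
        obtain ⟨u, hu, hu2⟩ := h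
        refine ⟨u, ?_, hu2, hc⟩
        by_contra hcon
        exact hc u (Finset.mem_sdiff.mpr ⟨hu, hcon⟩) hu2
    have h2 := Pr_exists (Γ v) (fun u c => A u c ∧ ∀ w ∈ S2, ¬ A w c) _
      (fun u _ => ih _ hcard S2 rfl u)
    have h3 : ((Γ v).card : ℝ) ≤ Δ := by exact_mod_cast hΓ v
    have h4 : ((Γ v).card : ℝ) * (2 * p * Pr (fun c => ∀ w ∈ S2, ¬ A w c)) ≤
        Δ * (2 * p * Pr (fun c => ∀ w ∈ S2, ¬ A w c)) := by
      gcongr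
    have h5 : (1/2 - 2 * p * Δ) * Pr (fun c => ∀ w ∈ S2, ¬ A w c) ≥ 0 :=
      mul_nonneg (by linarith) hn2
    have h6 : Pr (fun c => ∀ w ∈ S2, ¬ A w c) ≤ 2 * Pr (fun c => ∀ w ∈ S, ¬ A w c) := by
      nlinarith
    calc _ ≤ _ := hb
      _ ≤ p * (2 * Pr (fun c => ∀ w ∈ S, ¬ A w c)) := by gcongr
      _ = _ := by ring

lemma lll_main [Nonempty P] (A : V → (V → P) → Prop) (Γ : V → Finset V) (p : ℝ) (Δ : ℕ) (hp : 0 ≤ p)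
    (hp1 : p ≤ 1/4)
    (hΓ : ∀ v, (Γ v).card ≤ Δ) (hpΔ : 4 * p * Δ ≤ 1)
    (hind : ∀ v, ∀ T : Finset V, Disjoint T (Γ v) →
      Pr (fun c => A v c ∧ ∀ w ∈ T, ¬ A w c) ≤ p * Pr (fun c => ∀ w ∈ T, ¬ A w c)) :
    ∃ c, ∀ v, ¬ A v c := by
  have key : ∀ S : Finset V, 0 < Pr (fun c => ∀ w ∈ S, ¬ A w c) := by
    intro S
    induction S using Finset.induction_on with
    | empty => simp [Pr, Ex_const]
    | insert a s ha ih =>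
      have h1 := lll_step A Γ p Δ hp hΓ hpΔ hind _ s rfl a
      have h2 : Pr (fun c => ∀ w ∈ s, ¬ A w c) ≤ Pr (fun c => ∀ w ∈ insert a s, ¬ A w c) +
        Pr (fun c => A a c ∧ ∀ w ∈ s, ¬ A w c) := by
        refine le_trans (Pr_mono ?_) (Pr_or _ _)
        intro c hc
        by_cases h : A a c
        · exact Or.inr ⟨h, hc⟩
        · left
          intro w hw
          rcases Finset.mem_insert.mp hw with rfl | hw
          · exact h
          · exact hc w hw
      nlinarith
  by_contra hcon
  push Not at hcon
  have := key univ
  have h0 : Pr (fun c => ∀ w ∈ (univ : Finset V), ¬ A w c) = Pr (fun _ : V → P => False) := by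
    congr 1
    ext c
    simp only [mem_univ, true_implies, iff_false]
    intro h
    obtain ⟨v, hv⟩ := hcon c
    exact h v hv
  rw [h0, Pr_false] at this
  exact lt_irrefl _ this

/-- Product-space symmetric local lemma. -/
lemma lll_prod [Nonempty P] (A : V → (V → P) → Prop) (K : V → Finset V) (Γ : V → Finset V)
    (p : ℝ) (Δ : ℕ) (hp : 0 ≤ p) (hp1 : p ≤ 1/4)
    (hK : ∀ v, DepOn (K v) (A v))
    (hKΓ : ∀ v w, w ∉ Γ v → Disjoint (K v) (K w))
    (hΓ : ∀ v, (Γ v).card ≤ Δ) (hpΔ : 4 * p * Δ ≤ 1)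
    (hA : ∀ v, Pr (A v) ≤ p) :
    ∃ c, ∀ v, ¬ A v c := by
  refine lll_main A Γ p Δ hp hp1 hΓ hpΔ ?_
  intro v T hT
  have h1 : Pr (fun c => A v c ∧ ∀ w ∈ T, ¬ A w c) = Pr (A v) * Pr (fun c => ∀ w ∈ T, ¬ A w c) := by
    unfold Pr
    rw [← Ex_indep (K v) (T.biUnion K)]
    · congr 1
      ext c
      by_cases h1 : A v c <;> by_cases h2 : ∀ w ∈ T, ¬ A w c <;> simp [h1, h2]
    · rw [Finset.disjoint_biUnion_right]
      intro w hw
      exact hKΓ v w (Finset.disjoint_left.mp hT hw)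
    · intro c c' h
      simp only
      rw [hK v c c' h]
    · intro c c' h
      have : (∀ w ∈ T, ¬ A w c) = (∀ w ∈ T, ¬ A w c') := by
        apply propext
        apply forall_congr'; intro w
        apply forall_congr'; intro hw
        rw [hK w c c' (fun i hi => h i (Finset.mem_biUnion.mpr ⟨w, hw, hi⟩))]
      simp only
      by_cases hh : ∀ w ∈ T, ¬ A w c'
      · rw [if_pos hh, if_pos (this.symm ▸ hh)]
      · rw [if_neg hh, if_neg (this.symm ▸ hh)]
  rw [h1]
  exact mul_le_mul_of_nonneg_right (hA v) (Pr_nonneg _)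

/-- local optimum colouring -/
lemma local_opt (Q : Type) [Fintype Q] [Nonempty Q] (w : V → V → ℕ) (hs : ∀ a b, w a b = w b a)
    (h0 : ∀ a, w a a = 0) :
    ∃ c : V → Q, ∀ v, Fintype.card Q * (∑ v', if c v' = c v then w v v' else 0) ≤ ∑ v', w v v' := by
  obtain ⟨c, -, hc⟩ := Finset.exists_min_image (univ : Finset (V → Q))
    (fun c => ∑ a, ∑ b, if c b = c a then w a b else 0) Finset.univ_nonempty
  refine ⟨c, fun v => ?_⟩
  have split : ∀ c : V → Q, (∑ a, ∑ b, if c b = c a then w a b else 0) =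
      2 * (∑ b ∈ univ.erase v, if c b = c v then w v b else 0) +
      ∑ a ∈ univ.erase v, ∑ b ∈ univ.erase v, if c b = c a then w a b else 0 := by
    intro c
    rw [← Finset.add_sum_erase univ _ (mem_univ v)]
    have e1 : ∀ a, (∑ b, if c b = c a then w a b else 0) = (if c v = c a then w a v else 0) +
        ∑ b ∈ univ.erase v, if c b = c a then w a b else 0 := by
      intro a
      rw [← Finset.add_sum_erase univ _ (mem_univ v)]
    simp only [e1]
    rw [Finset.sum_add_distrib]
    have e2 : (∑ x ∈ univ.erase v, if c v = c x then w x v else 0) =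
        ∑ b ∈ univ.erase v, if c b = c v then w v b else 0 := by
      apply Finset.sum_congr rfl
      intro b _
      rw [hs b v]
      simp only [eq_comm]
    rw [e2]
    simp [h0]
    ring
  have key : ∀ q : Q, (∑ v', if c v' = c v then w v v' else 0) ≤
      ∑ v', if c v' = q then w v v' else 0 := by
    intro q
    have h := hc (Function.update c v q) (mem_univ _)
    rw [split c, split (Function.update c v q)] at h
    have e3 : (∑ a ∈ univ.erase v, ∑ b ∈ univ.erase v,
        if Function.update c v q b = Function.update c v q a then w a b else 0) =
        ∑ a ∈ univ.erase v, ∑ b ∈ univ.erase v, if c b = c a then w a b else 0 := by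
      apply Finset.sum_congr rfl
      intro a ha
      apply Finset.sum_congr rfl
      intro b hb
      rw [Function.update_of_ne (Finset.ne_of_mem_erase ha), Function.update_of_ne (Finset.ne_of_mem_erase hb)]
    have e4 : (∑ b ∈ univ.erase v, if Function.update c v q b = Function.update c v q v then w v b else 0)
        = ∑ b ∈ univ.erase v, if c b = q then w v b else 0 := by
      apply Finset.sum_congr rfl
      intro b hb
      rw [Function.update_of_ne (Finset.ne_of_mem_erase hb), Function.update_self]
    rw [e3, e4] at h
    rw [← Finset.add_sum_erase univ _ (mem_univ v)]
    rw [← Finset.add_sum_erase univ (fun v' => if c v' = q then w v v' else 0) (mem_univ v)]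
    simp only [h0, ite_self, zero_add]
    omega
  calc _ = ∑ q : Q, ∑ v', (if c v' = c v then w v v' else 0) := by simp
    _ ≤ ∑ q : Q, ∑ v', (if c v' = q then w v v' else 0) := Finset.sum_le_sum fun q _ => key q
    _ = _ := by
      rw [Finset.sum_comm]
      simp

end Lll

section Loc
set_option linter.unusedSectionVars false
open Finset
open scoped Classical

variable {V P : Type} [Fintype V] [Fintype P]

noncomputable def hit (Y : Finset P) (s : Finset V) (c : V → P) : Finset V := s.filter (fun u => c u ∈ Y)

noncomputable def rep (Y : Finset P) (s : Finset V) (c : V → P) : ℕ :=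
  (hit Y s c).card - ((hit Y s c).image c).card

noncomputable def repF (Y : Finset P) (K t : ℝ) (s : Finset V) (c : V → P) : ℝ :=
  (1 + t) ^ (rep Y s c) * (if ((hit Y s c).card : ℝ) ≤ K then 1 else 0)

lemma hit_congr (Y : Finset P) (s : Finset V) (c c' : V → P) (h : ∀ i ∈ s, c i = c' i) :
    hit Y s c = hit Y s c' := by
  unfold hit
  apply Finset.filter_congr
  intro u hu
  rw [h u hu]

lemma image_congr_hit (Y : Finset P) (s : Finset V) (c c' : V → P) (h : ∀ i ∈ s, c i = c' i) :
    (hit Y s c).image c = (hit Y s c').image c' := by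
  rw [hit_congr Y s c c' h]
  apply Finset.image_congr
  intro u hu
  exact h u (Finset.mem_filter.mp hu).1

lemma rep_step (Y : Finset P) (K t : ℝ) (ht : 0 ≤ t) (s : Finset V) (a : V) (ha : a ∉ s)
    (c d : V → P) (h : ∀ i ∈ s, d i = c i) :
    repF Y K t (insert a s) d ≤ repF Y K t s c * (1 + if d a ∈ (hit Y s c).image c then t else 0) := by
  have h1 := hit_congr Y s d c h
  have h2 := image_congr_hit Y s d c h
  have hle : ((hit Y s c).image c).card ≤ (hit Y s c).card := Finset.card_image_le
  have hpow : ∀ n : ℕ, (0:ℝ) ≤ (1 + t) ^ n := fun n => by positivity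
  by_cases hY : d a ∈ Y
  · have e1 : hit Y (insert a s) d = insert a (hit Y s c) := by
      rw [← h1]; unfold hit; rw [Finset.filter_insert, if_pos hY]
    have e2 : (hit Y (insert a s) d).image d = insert (d a) ((hit Y s c).image c) := by
      rw [e1, Finset.image_insert, ← h2, h1]
    have ha' : a ∉ hit Y s c := fun h => ha (Finset.mem_filter.mp h).1
    unfold repF rep
    rw [e2, e1, Finset.card_insert_of_notMem ha']
    have hind : (if (((hit Y s c).card + 1 : ℕ) : ℝ) ≤ K then (1:ℝ) else 0) ≤
        (if ((hit Y s c).card : ℝ) ≤ K then 1 else 0) := by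
      push_cast
      split_ifs <;> linarith
    split_ifs at hind ⊢ with h3 h4 h5 <;> try linarith
    all_goals first
      | (rw [Finset.card_insert_of_mem ‹_›, Nat.succ_sub hle, pow_succ]; linarith)
      | (rw [Finset.card_insert_of_notMem ‹_›, Nat.add_sub_add_right]; linarith)
      | (simp; try positivity)
  · have e1 : hit Y (insert a s) d = hit Y s c := by
      rw [← h1]; unfold hit; rw [Finset.filter_insert, if_neg hY]
    have e2 : (hit Y (insert a s) d).image d = (hit Y s c).image c := by
      rw [e1, ← h2, h1]
    unfold repF rep
    rw [e2, e1]
    apply le_mul_of_one_le_right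
    · apply mul_nonneg (hpow _); split_ifs <;> norm_num
    · split_ifs <;> linarith

lemma Ex_one_coord [Nonempty P] (a : V) (g : P → ℝ) :
    Ex (fun c : V → P => g (c a)) = (∑ y, g y) / Fintype.card P := by
  have := Ex_prod (V := V) (P := P) {a} (fun _ => g)
  simpa using this

lemma Ex_const_mul (f : (V → P) → ℝ) (a : ℝ) : Ex (fun c => a * f c) = a * Ex f := by
  unfold Ex
  rw [← Finset.mul_sum]; ring

lemma Ex_nonneg (f : (V → P) → ℝ) (h : ∀ c, 0 ≤ f c) : 0 ≤ Ex f :=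
  div_nonneg (Finset.sum_nonneg fun c _ => h c) (by positivity)

lemma rep_mgf [Nonempty P] (Y : Finset P) (K t : ℝ) (ht : 0 ≤ t) (hK : 0 ≤ K) (s : Finset V) :
    Ex (repF Y K t s) ≤ (1 + t * (K / Fintype.card P)) ^ s.card := by
  have hP : (0:ℝ) < Fintype.card P := by exact_mod_cast Fintype.card_pos
  induction s using Finset.induction_on with
  | empty =>
    have : (repF Y K t (∅ : Finset V)) = fun _ => (1:ℝ) := by
      ext c
      simp [repF, rep, hit, hK]
    rw [this, Ex_const]; simp
  | insert a s ha ih =>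
    rw [Ex_mix {a}, Finset.card_insert_of_notMem ha, pow_succ]
    calc _ ≤ Ex (fun c => repF Y K t s c * (1 + t * (K / Fintype.card P))) := by
          apply Ex_mono
          intro c
          calc _ ≤ Ex (fun c' : V → P => repF Y K t s c *
                (1 + if c' a ∈ (hit Y s c).image c then t else 0)) := by
                apply Ex_mono
                intro c'
                have := rep_step Y K t ht s a ha c (Finset.piecewise {a} c' c) (fun i hi => by
                  have : i ≠ a := fun h => ha (h ▸ hi)
                  simp [this])
                simpa using this
            _ = repF Y K t s c * (1 + t * (((hit Y s c).image c).card / Fintype.card P)) := by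
                rw [Ex_const_mul, Ex_one_coord a (fun y => 1 + if y ∈ (hit Y s c).image c then t else 0)]
                rw [Finset.sum_add_distrib, Finset.sum_ite_mem]
                congr 1
                simp
                field_simp
            _ ≤ _ := by
                unfold repF
                split_ifs with h
                · have hle : (((hit Y s c).image c).card : ℝ) ≤ (hit Y s c).card := by
                    exact_mod_cast Finset.card_image_le
                  have := hle.trans h
                  gcongr
                · simp
      _ = Ex (repF Y K t s) * (1 + t * (K / Fintype.card P)) := Ex_mul_const _ _
      _ ≤ _ := by gcongr

lemma rep_tail [Nonempty P] (Y : Finset P) (K t : ℝ) (ht : 0 < t) (hK : 0 ≤ K) (s : Finset V) (μ : ℝ)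
    (hμ : μ = s.card * (K / Fintype.card P)) :
    Pr (fun c : V → P => ((hit Y s c).card : ℝ) ≤ K ∧ (1 + 2 * t) * μ ≤ rep Y s c) ≤
      Real.exp (-(t ^ 2 / (1 + t) * μ)) := by
  have hP : (0:ℝ) < Fintype.card P := by exact_mod_cast Fintype.card_pos
  have ht1 : 0 < 1 + t := by linarith
  have hμ0 : 0 ≤ μ := by rw [hμ]; positivity
  have hE : Ex (repF Y K t s) ≤ Real.exp (t * μ) := by
    refine (rep_mgf Y K t ht.le hK s).trans ?_
    have h1 : 1 + t * (K / Fintype.card P) ≤ Real.exp (t * (K / Fintype.card P)) := by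
      have := Real.add_one_le_exp (t * (K / Fintype.card P)); linarith
    calc _ ≤ Real.exp (t * (K / Fintype.card P)) ^ s.card := by gcongr
      _ = _ := by rw [← Real.exp_nat_mul, hμ]; congr 1; ring
  have hM := Markov (f := repF Y K t s) (a := (1 + t) ^ ((1 + 2 * t) * μ)) (by positivity)
    (fun c => by unfold repF; split_ifs <;> simp; positivity)
  refine le_trans (Pr_mono ?_) (hM.trans ?_)
  · rintro c ⟨h1, h2⟩
    unfold repF
    rw [if_pos h1, mul_one, ← Real.rpow_natCast]
    exact Real.rpow_le_rpow_of_exponent_le (by linarith) h2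
  · have hlog : t / (1 + t) ≤ Real.log (1 + t) := by
      have := Real.one_sub_inv_le_log_of_pos ht1
      refine le_trans (le_of_eq ?_) this
      field_simp; ring
    rw [div_le_iff₀ (by positivity), Real.rpow_def_of_pos ht1, ← Real.exp_add]
    refine hE.trans (Real.exp_le_exp.mpr ?_)
    have : t / (1 + t) * ((1 + 2 * t) * μ) ≤ Real.log (1 + t) * ((1 + 2 * t) * μ) := by
      gcongr
    have e : -(t ^ 2 / (1 + t) * μ) + t / (1 + t) * ((1 + 2 * t) * μ) = t * μ := by
      field_simp; ring
    linarith

/-- twice the number of distinct colours is at most hits plus uniquely coloured hits -/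
lemma unique_bound (Y : Finset P) (N : Finset V) (c : V → P) :
    2 * ((hit Y N c).image c).card ≤ (hit Y N c).card +
      ((hit Y N c).filter (fun u => ∀ u' ∈ N, u' ≠ u → c u' ≠ c u)).card := by
  set T := hit Y N c with hT
  set U := T.filter (fun u => ∀ u' ∈ N, u' ≠ u → c u' ≠ c u) with hU
  have h1 : T.card = ∑ y ∈ T.image c, (T.filter (fun u => c u = y)).card :=
    Finset.card_eq_sum_card_image c T
  have h2 : U.card = ∑ y ∈ T.image c, (U.filter (fun u => c u = y)).card :=
    Finset.card_eq_sum_card_fiberwise (fun u hu =>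
      Finset.mem_image_of_mem c (Finset.mem_filter.mp hu).1)
  rw [h1, h2, ← Finset.sum_add_distrib, mul_comm, ← smul_eq_mul]
  apply Finset.card_nsmul_le_sum
  intro y hy
  obtain ⟨u, hu, rfl⟩ := Finset.mem_image.mp hy
  have hpos : 1 ≤ (T.filter (fun u' => c u' = c u)).card :=
    Finset.card_pos.mpr ⟨u, by simp [hu]⟩
  by_cases h : 2 ≤ (T.filter (fun u' => c u' = c u)).card
  · omega
  · have hone : (T.filter (fun u' => c u' = c u)).card = 1 := by omega
    have : 1 ≤ (U.filter (fun u' => c u' = c u)).card := by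
      apply Finset.card_pos.mpr
      refine ⟨u, ?_⟩
      rw [Finset.mem_filter, hU, Finset.mem_filter]
      refine ⟨⟨hu, ?_⟩, rfl⟩
      intro u' hu' hne heq
      obtain ⟨z, hz⟩ := Finset.card_eq_one.mp hone
      have a1 : u' ∈ T.filter (fun u' => c u' = c u) := by
        rw [Finset.mem_filter]
        refine ⟨?_, heq⟩
        rw [hT, hit, Finset.mem_filter]
        rw [hT, hit, Finset.mem_filter] at hu
        exact ⟨hu', heq ▸ hu.2⟩
      have a2 : u ∈ T.filter (fun u' => c u' = c u) := by simp [hu]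
      rw [hz, Finset.mem_singleton] at a1 a2
      exact hne (a1.trans a2.symm)
    omega

noncomputable def goodSet (Y : Finset P) (Cu : V → Finset P) (N U : Finset V) (c : V → P) : Finset V :=
  U.filter (fun u => c u ∈ Y ∧ c u ∉ Cu u ∧ ∀ u' ∈ N, u' ≠ u → c u' ≠ c u)

lemma good_lower (Y : Finset P) (Cu : V → Finset P) (N U : Finset V) (hU : U ⊆ N) (c : V → P) :
    (hit Y U c).card ≤ (goodSet Y Cu N U c).card + (U.filter (fun u => c u ∈ Cu u)).card
      + 2 * rep Y N c := by
  have h1 := unique_bound Y N c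
  have hle : ((hit Y N c).image c).card ≤ (hit Y N c).card := Finset.card_image_le
  have h2 := Finset.card_filter_add_card_filter_not (s := hit Y N c)
    (fun u => ∀ u' ∈ N, u' ≠ u → c u' ≠ c u)
  have h3 : hit Y U c ⊆ goodSet Y Cu N U c ∪ U.filter (fun u => c u ∈ Cu u) ∪
      (hit Y N c).filter (fun u => ¬ ∀ u' ∈ N, u' ≠ u → c u' ≠ c u) := by
    intro u hu
    rw [hit, Finset.mem_filter] at hu
    simp only [Finset.mem_union, goodSet, hit, Finset.mem_filter]
    have := hU hu.1
    tauto
  have h4 := (Finset.card_le_card h3).trans (Finset.card_union_le _ _)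
  have h5 := Finset.card_union_le (goodSet Y Cu N U c) (U.filter (fun u => c u ∈ Cu u))
  unfold rep
  omega

lemma local_tail [Nonempty P] (Y : Finset P) (Cu : V → Finset P) (N U : Finset V) (hU : U ⊆ N)
    (hUc : (3:ℝ)/4 * N.card ≤ U.card)
    (hNm : (N.card : ℝ) ≤ Fintype.card P / 23)
    (hCu : ∀ u ∈ U, ((Cu u).card : ℝ) ≤ 17/100 * Y.card)
    (μ ν : ℝ) (hμ : μ = N.card * (Y.card / Fintype.card P))
    (hμ0 : 0 < μ)
    (hν1 : ν ≤ 12/100 * μ) (hν2 : ν ≤ N.card * (μ / Fintype.card P)) :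
    Pr (fun c : V → P => ((goodSet Y Cu N U c).card : ℝ) < 52/100 * μ) ≤
      4 * Real.exp (-((1/400:ℝ)^2/(1+1/400) * ν)) := by
  have hP : (0:ℝ) < Fintype.card P := by exact_mod_cast Fintype.card_pos
  set m : ℝ := (Fintype.card P : ℝ) with hm
  set t : ℝ := 1/400 with ht
  set D : ℝ := (Y.card : ℝ) with hD
  set n : ℝ := (N.card : ℝ) with hn
  set r : ℝ := (U.card : ℝ) with hr
  have hrn : r ≤ n := by rw [hr, hn]; exact_mod_cast Finset.card_le_card hU
  have hn0 : 0 ≤ n := by positivity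
  have hDm : 0 ≤ D / m := by positivity
  set ρ := r * (D / m) with hρ
  have hρ1 : 3/4 * μ ≤ ρ := by
    rw [hμ, hρ]; nlinarith
  have hρ2 : ρ ≤ μ := by rw [hμ, hρ]; nlinarith
  have E1 := chernoff_lower (V := V) (P := P) U Y ρ t (by norm_num [ht]) (by norm_num [ht])
    (by linarith) le_rfl
  have E2 := chernoff_upper (V := V) (P := P) U (fun _ => 1) (by simp) (by simp) Cu (17/100 * ρ) t
    (by norm_num [ht]) (by
      calc _ ≤ ∑ u ∈ U, 17/100 * (D / m) := by
            apply Finset.sum_le_sum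
            intro u hu
            rw [one_mul, ← mul_div_assoc]
            gcongr
            exact hCu u hu
        _ = 17/100 * ρ := by simp [hρ, hr]; ring)
  have E3 := chernoff_upper (V := V) (P := P) N (fun _ => 1) (by simp) (by simp) (fun _ => Y) μ t
    (by norm_num [ht]) (by rw [hμ]; simp [hD, hm, hn])
  have E4 := rep_tail (V := V) Y ((1 + 2 * t) * μ) t (by norm_num [ht])
    (mul_nonneg (by norm_num [ht]) hμ0.le) N _ rfl
  set κ := t ^ 2 / (1 + t) with hκ
  have hκ0 : 0 ≤ κ := by positivity
  have hexp : ∀ x, ν ≤ x → Real.exp (-(κ * x)) ≤ Real.exp (-(κ * ν)) := by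
    intro x hx
    apply Real.exp_le_exp.mpr
    have := mul_le_mul_of_nonneg_left hx hκ0
    linarith
  have hnm2 : 0 ≤ n * (μ / m) := by positivity
  have B1 := E1.trans (hexp _ (by linarith))
  have B2 := E2.trans (hexp _ (by linarith))
  have B3 := E3.trans (hexp _ (by linarith))
  have B4 := E4.trans (hexp _ (by
    have : n * ((1 + 2 * t) * μ / m) = (1 + 2 * t) * (n * (μ / m)) := by ring
    show ν ≤ n * ((1 + 2 * t) * μ / m)
    rw [this, ht]; linarith))
  have hfin : Pr (fun c : V → P => ((goodSet Y Cu N U c).card : ℝ) < 52/100 * μ) ≤ _ :=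
    (Pr_mono (fun c hc => ?_)).trans ((Pr_or _ _).trans (add_le_add ((Pr_or _ _).trans
      (add_le_add ((Pr_or _ _).trans (add_le_add B1 B2)) B3)) B4))
  · refine hfin.trans (le_of_eq ?_)
    ring
  · by_contra hcon
    push Not at hcon
    obtain ⟨⟨⟨h1, h2⟩, h3⟩, h4⟩ := hcon
    have g := good_lower Y Cu N U hU c
    have g' : ((hit Y U c).card : ℝ) ≤ (goodSet Y Cu N U c).card + (U.filter (fun u => c u ∈ Cu u)).card
      + 2 * rep Y N c := by exact_mod_cast g
    rw [Finset.sum_boole] at h2 h3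
    have h4' := h4 h3.le
    change _ < ((hit Y U c).card : ℝ) at h1
    have e5 : n * ((1 + 2 * t) * μ / m) ≤ (1 + 2 * t) * μ / 23 := by
      have : n / m ≤ 1 / 23 := by
        rw [div_le_iff₀ hP]; linarith
      calc _ = n / m * ((1 + 2 * t) * μ) := by ring
        _ ≤ 1/23 * ((1 + 2 * t) * μ) := by
          gcongr
        _ = _ := by ring
    have e6 : (rep Y N c : ℝ) < (1 + 2 * t) * (n * ((1 + 2 * t) * μ / m)) := h4'
    rw [ht] at *
    linarith

end Loc

section Core
open Finset
open scoped Classical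
set_option linter.unusedSectionVars false

lemma palette_aux {C P : Type} [Fintype C] [Fintype P] [Nonempty P] (hP4 : Fintype.card P = 4) (z : P)
    (n : ℕ) (hn : Fintype.card C = n)
    (𝒢 : SimpleGraph C) (δ : ℝ) (hδ : 0 ≤ δ) (hδn : δ ≤ n)
    (hdeg : ∀ x, δ ≤ ((univ.filter (fun y => 𝒢.Adj x y)).card : ℝ))
    (hbig : ((n:ℝ) + 2) * Real.exp (-((1/400:ℝ)^2/(1+1/400) * (δ/4))) < 1) :
    ∃ P1 : Finset C, 199/200*(3/4)*(n:ℝ) ≤ P1.card ∧ (P1.card:ℝ) ≤ 201/200*(3/4)*n ∧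
      199/200*(1/4)*(n:ℝ) ≤ (P1ᶜ.card : ℝ) ∧
      ∀ x, 199/200*(3/4)*δ ≤ ((P1.filter (fun y => 𝒢.Adj x y)).card : ℝ) := by
  obtain ⟨t, ht⟩ : ∃ t : ℝ, t = 1/400 := ⟨_, rfl⟩
  rw [← ht] at hbig
  obtain ⟨κ, hκ⟩ : ∃ κ : ℝ, κ = t^2/(1+t) := ⟨_, rfl⟩
  have hκ0 : 0 ≤ κ := by rw [hκ, ht]; norm_num
  have hexp : ∀ x, δ/4 ≤ x → Real.exp (-(t^2/(1+t) * x)) ≤ Real.exp (-(κ * (δ/4))) := by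
    intro x hx
    rw [← hκ]
    apply Real.exp_le_exp.mpr
    have := mul_le_mul_of_nonneg_left hx hκ0
    linarith
  have ht0 : 0 < t := by norm_num [ht]
  have ht2 : t < 1/2 := by norm_num [ht]
  obtain ⟨Z, hZ⟩ : ∃ Z : Finset P, Z = univ.erase z := ⟨_, rfl⟩
  have c4 : (Z.card : ℝ) / (Fintype.card P : ℝ) = 3/4 := by
    rw [hZ, Finset.card_erase_of_mem (mem_univ _), Finset.card_univ, hP4]; norm_num
  have c1 : ((({z} : Finset P).card : ℝ)) / (Fintype.card P : ℝ) = 1/4 := by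
    rw [hP4]; norm_num
  have cC : ((univ : Finset C).card : ℝ) = n := by rw [Finset.card_univ, hn]
  have E1 := (chernoff_lower (V := C) (P := P) univ Z
    (3/4*n) t ht0 ht2 (by positivity) (by
      rw [c4, cC]; linarith)).trans (hexp _ (by linarith))
  have E2 := (chernoff_lower (V := C) (P := P) univ {z}
    (1/4*n) t ht0 ht2 (by positivity) (by
      rw [c1, cC]; linarith)).trans (hexp _ (by linarith))
  have E3 := Pr_exists (V := C) (P := P) (univ : Finset C) (fun x c =>
    (((univ.filter (fun y => 𝒢.Adj x y)).filter (fun u => c u ∈ Z)).card : ℝ) ≤ (1 - 2 * t) * (3/4*δ))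
    (Real.exp (-(κ * (δ/4)))) (fun x _ =>
    (chernoff_lower (V := C) (P := P) _ Z
    (3/4*δ) t ht0 ht2 (by positivity) (by
      rw [c4]; have := hdeg x; linarith)).trans (hexp _ (by linarith)))
  have hall := (Pr_or _ _).trans (add_le_add ((Pr_or _ _).trans (add_le_add E1 E2)) E3)
  have hlt := lt_of_le_of_lt hall (by
    refine lt_of_le_of_lt (le_of_eq ?_) hbig
    rw [cC, hκ]; ring)
  obtain ⟨c, hc⟩ := Pr_lt_one_exists hlt
  push Not at hc
  obtain ⟨⟨h1, h2⟩, h3⟩ := hc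
  obtain ⟨P1, hP1⟩ : ∃ P1 : Finset C, P1 = univ.filter (fun u => c u ∈ Z) := ⟨_, rfl⟩
  have hc2 : univ.filter (fun u => c u ∈ ({z} : Finset P)) = P1ᶜ := by
    ext; simp [hP1, hZ]
  rw [← hP1] at h1
  rw [hc2] at h2
  have hsum : (P1.card : ℝ) + P1ᶜ.card = n := by
    have := Finset.card_add_card_compl P1
    rw [hn] at this
    exact_mod_cast this
  rw [ht] at h1 h2 h3
  refine ⟨P1, by linarith, by linarith, by linarith, fun x => ?_⟩
  have h4 := h3 x (mem_univ x)
  have : ((univ.filter (fun y => 𝒢.Adj x y)).filter (fun u => c u ∈ Z))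
     = P1.filter (fun y => 𝒢.Adj x y) := by
    ext; simp [hP1, and_comm]
  rw [this] at h4
  linarith

lemma palette {C : Type} [Fintype C] (n : ℕ) (hn : Fintype.card C = n)
    (𝒢 : SimpleGraph C) (δ : ℝ) (hδ : 0 ≤ δ) (hδn : δ ≤ n)
    (hdeg : ∀ x, δ ≤ ((univ.filter (fun y => 𝒢.Adj x y)).card : ℝ))
    (hbig : ((n:ℝ) + 2) * Real.exp (-((1/400:ℝ)^2/(1+1/400) * (δ/4))) < 1) :
    ∃ P1 : Finset C, 199/200*(3/4)*(n:ℝ) ≤ P1.card ∧ (P1.card:ℝ) ≤ 201/200*(3/4)*n ∧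
      199/200*(1/4)*(n:ℝ) ≤ (P1ᶜ.card : ℝ) ∧
      ∀ x, 199/200*(3/4)*δ ≤ ((P1.filter (fun y => 𝒢.Adj x y)).card : ℝ) :=
  palette_aux (P := Fin 4) (Fintype.card_fin 4) 0 n hn 𝒢 δ hδ hδn hdeg hbig

variable {V C : Type} [Fintype V] [Fintype C]

noncomputable def Bd {γ : Type} (N : V → Finset V) (χ : V → γ) (v : V) : Finset V :=
  (N v).filter (fun u => ∃ v' ∈ N u, v' ≠ v ∧ χ v' = χ v)

lemma mem_Bd {γ : Type} (N : V → Finset V) (χ : V → γ) (v u : V) :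
    u ∈ Bd N χ v ↔ u ∈ N v ∧ ∃ v' ∈ N u, v' ≠ v ∧ χ v' = χ v := by
  unfold Bd; rw [Finset.mem_filter]

lemma mem_goodSet {P : Type} [Fintype P] (Y : Finset P) (Cu : V → Finset P) (N U : Finset V) (c : V → P) (u : V) :
    u ∈ goodSet Y Cu N U c ↔ u ∈ U ∧ c u ∈ Y ∧ c u ∉ Cu u ∧ ∀ u' ∈ N, u' ≠ u → c u' ≠ c u := by
  unfold goodSet; rw [Finset.mem_filter]

noncomputable def isS {P1 : Finset C} (N : V → Finset V) (c : V → P1) (v : V) : Prop :=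
  (N v).card < 4 * (Bd N c v).card

noncomputable def col {P1 : Finset C} (N : V → Finset V) (c2 : V → C) (c : V → P1) (v : V) : C :=
  if isS N c v then c2 v else (c v : C)

noncomputable def kept (𝒢 : SimpleGraph C) (N : V → Finset V) (χ : V → C) (v : V) : Finset V :=
  (N v).filter (fun u => 𝒢.Adj (χ v) (χ u) ∧ (∀ v' ∈ N u, v' ≠ v → χ v' ≠ χ v) ∧
    ∀ u' ∈ N v, u' ≠ u → χ u' ≠ χ u)

noncomputable def Yx (𝒢 : SimpleGraph C) (P1 : Finset C) (x : C) : Finset P1 :=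
  univ.filter (fun y => 𝒢.Adj x y)

noncomputable def cdg (N : V → Finset V) (u u' : V) : ℕ := (N u ∩ N u').card

lemma cdg_sum (N : V → Finset V) (hN : ∀ u v, u ∈ N v ↔ v ∈ N u) (u : V) :
    ∑ u', cdg N u u' = ∑ w ∈ N u, (N w).card := by
  have h1 : ∀ u', cdg N u u' = ∑ w ∈ N u, if u' ∈ N w then 1 else 0 := by
    intro u'
    unfold cdg
    rw [← Finset.filter_mem_eq_inter, Finset.card_filter]
    apply Finset.sum_congr rfl
    intro w _
    simp only [hN w u']
  simp only [h1]
  rw [Finset.sum_comm]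
  simp

noncomputable def badCol {P1 : Finset C} (N : V → Finset V) (v : V) (Y : Finset P1) (c : V → P1) (u : V) :
    Finset P1 :=
  Y.filter (fun y => (N u).card < 4 * ((N u).filter (fun w => ∃ u' ∈ N w, u' ∉ N v ∧ c u' = y)).card)

lemma badCol_card {P1 : Finset C} (N : V → Finset V) (hN : ∀ u v, u ∈ N v ↔ v ∈ N u)
    (v : V) (Y : Finset P1) (c : V → P1) (u : V) :
    (badCol N v Y c u).card * (N u).card ≤
      4 * ∑ u' ∈ (N v)ᶜ, if c u' ∈ Y then cdg N u u' else 0 := by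
  set g : P1 → ℕ := fun y => ((N u).filter (fun w => ∃ u' ∈ N w, u' ∉ N v ∧ c u' = y)).card with hg
  have h1 : (badCol N v Y c u).card * (N u).card ≤ ∑ y ∈ badCol N v Y c u, 4 * g y := by
    rw [← smul_eq_mul]
    apply Finset.card_nsmul_le_sum
    intro y hy
    exact (Finset.mem_filter.mp hy).2.le
  have h2 : ∑ y ∈ badCol N v Y c u, 4 * g y ≤ ∑ y ∈ Y, 4 * g y :=
    Finset.sum_le_sum_of_subset (Finset.filter_subset _ _)
  have h3 : ∀ y, g y ≤ ∑ u' ∈ (N v)ᶜ, if c u' = y then cdg N u u' else 0 := by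
    intro y
    rw [← Finset.sum_filter]
    have : (N u).filter (fun w => ∃ u' ∈ N w, u' ∉ N v ∧ c u' = y) ⊆
        ((N v)ᶜ.filter (fun u' => c u' = y)).biUnion (fun u' => N u ∩ N u') := by
      intro w hw
      rw [Finset.mem_filter] at hw
      obtain ⟨hw, u', h1, h2, h3⟩ := hw
      rw [Finset.mem_biUnion]
      refine ⟨u', ?_, ?_⟩
      · simp [h2, h3]
      · rw [Finset.mem_inter]; exact ⟨hw, (hN _ _).mp h1⟩
    exact (Finset.card_le_card this).trans Finset.card_biUnion_le
  refine h1.trans (h2.trans ?_)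
  rw [← Finset.mul_sum]
  apply Nat.mul_le_mul_left
  calc _ ≤ ∑ y ∈ Y, ∑ u' ∈ (N v)ᶜ, (if c u' = y then cdg N u u' else 0) :=
        Finset.sum_le_sum fun y _ => h3 y
    _ = _ := by
      rw [Finset.sum_comm]
      apply Finset.sum_congr rfl
      intro u' _
      rw [Finset.sum_ite_eq]

/-- the conditional inclusion -/
lemma good_sub_kept {P1 : Finset C} (𝒢 : SimpleGraph C) (N : V → Finset V)
    (hN : ∀ u v, u ∈ N v ↔ v ∈ N u)
    (side : V → Bool) (hside : ∀ u v, u ∈ N v → side u ≠ side v)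
    (c2 : V → C) (hc2 : ∀ v, c2 v ∉ P1) (v : V) (c c' : V → P1) :
    goodSet (Yx 𝒢 P1 (col N c2 c v)) (badCol N v (Yx 𝒢 P1 (col N c2 c v)) c) (N v)
      (N v \ (if isS N c v then Bd N c2 v else Bd N c v)) c' ⊆
      kept 𝒢 N (col N c2 ((N v).piecewise c' c)) v := by
  intro u hu
  rw [mem_goodSet, Finset.mem_sdiff] at hu
  obtain ⟨⟨huN, huQ⟩, huY, huC, huniq⟩ := hu
  set e := (N v).piecewise c' c with he
  have eN : ∀ z ∈ N v, e z = c' z := fun z hz => by simp [he, hz]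
  have eO : ∀ z, z ∉ N v → e z = c z := fun z hz => by simp [he, hz]
  have hv : v ∉ N v := fun h => hside _ _ h rfl
  have h2 : ∀ w ∈ N v, ∀ v' ∈ N w, v' ∉ N v := by
    intro w hw v' hv' h
    have a := hside _ _ hw
    have b := hside _ _ hv'
    have c := hside _ _ h
    revert a b c
    cases side w <;> cases side v' <;> cases side v <;> simp
  have hB : Bd N e v = Bd N c v := by
    ext w
    rw [mem_Bd, mem_Bd]
    apply and_congr_right
    intro hw
    constructor
    · rintro ⟨v', h1, h3, h4⟩
      exact ⟨v', h1, h3, by rw [← eO v' (h2 w hw v' h1), h4, eO v hv]⟩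
    · rintro ⟨v', h1, h3, h4⟩
      exact ⟨v', h1, h3, by rw [eO v' (h2 w hw v' h1), h4, eO v hv]⟩
  have hS : isS N e v ↔ isS N c v := by unfold isS; rw [hB]
  have hcol : col N c2 e v = col N c2 c v := by
    unfold col
    by_cases h : isS N c v
    · rw [if_pos h, if_pos (hS.mpr h)]
    · rw [if_neg h, if_neg (fun h' => h (hS.mp h')), eO v hv]
  have huS : ¬ isS N e u := by
    unfold isS
    have hsub : Bd N e u ⊆ (N u).filter (fun w => ∃ u' ∈ N w, u' ∉ N v ∧ c u' = c' u) := by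
      intro w hw
      rw [mem_Bd] at hw
      rw [Finset.mem_filter]
      obtain ⟨hw, u', h3, h4, h5⟩ := hw
      have h6 : u' ∉ N v := by
        intro h
        apply huniq u' h h4
        rw [← eN u' h, h5, eN u huN]
      exact ⟨hw, u', h3, h6, by rw [← eO u' h6, h5, eN u huN]⟩
    have := Finset.card_le_card hsub
    rw [badCol, Finset.mem_filter, not_and] at huC
    have := huC huY
    omega
  have hcolu : col N c2 e u = (c' u : C) := by
    unfold col; rw [if_neg huS, eN u huN]
  have colP : ∀ z (y : P1), col N c2 e z = (y : C) → e z = y := by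
    intro z y h
    unfold col at h
    split_ifs at h with hs
    · exact absurd (h ▸ y.2) (hc2 z)
    · exact Subtype.ext h
  rw [kept, Finset.mem_filter]
  refine ⟨huN, ?_, ?_, ?_⟩
  · rw [hcol, hcolu]
    exact (Finset.mem_filter.mp huY).2
  · intro v' hv' hne heq
    apply huQ
    by_cases h : isS N c v
    · rw [if_pos h]
      rw [mem_Bd]
      refine ⟨huN, v', hv', hne, ?_⟩
      have h7 : col N c2 e v = c2 v := by unfold col; rw [if_pos (hS.mpr h)]
      rw [h7] at heq
      unfold col at heq
      split_ifs at heq with hs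
      · exact heq
      · exact absurd (heq ▸ (e v').2) (hc2 v)
    · rw [if_neg h]
      rw [mem_Bd]
      refine ⟨huN, v', hv', hne, ?_⟩
      have h7 : col N c2 e v = (e v : C) := by unfold col; rw [if_neg (fun h' => h (hS.mp h'))]
      rw [h7] at heq
      have := colP v' _ heq
      rw [← eO v' (h2 u huN v' hv'), this, eO v hv]
  · intro u' hu' hne heq
    rw [hcolu] at heq
    have := colP u' _ heq
    rw [eN u' hu'] at this
    exact huniq u' hu' hne this

end Core

section Vtx
open Finset
open scoped Classical
set_option linter.unusedSectionVars false
variable {V C P : Type} [Fintype V] [Fintype C] [Fintype P]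

lemma Bd_sub {γ : Type} (N : V → Finset V) (χ : V → γ) (v : V) : Bd N χ v ⊆ N v := by
  intro u hu
  exact ((mem_Bd N χ v u).mp hu).1

noncomputable def wsum (N : V → Finset V) (u : V) (S : Finset V) (Y : Finset P) (c : V → P) : ℝ :=
  ∑ u' ∈ S, if c u' ∈ Y then (cdg N u u' : ℝ) / (N u).card else 0

lemma wsum_dep (N : V → Finset V) (u : V) (S : Finset V) (Y : Finset P) (c c' : V → P)
    (h : ∀ i ∈ S, c i = c' i) : wsum N u S Y c = wsum N u S Y c' := by
  unfold wsum
  apply Finset.sum_congr rfl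
  intro i hi
  rw [h i hi]

lemma wsum_eq (N : V → Finset V) (u : V) (S : Finset V) (Y : Finset P) (c : V → P) :
    wsum N u S Y c = ((∑ u' ∈ S, if c u' ∈ Y then cdg N u u' else 0 : ℕ) : ℝ) / (N u).card := by
  unfold wsum
  push_cast
  rw [Finset.sum_div]
  apply Finset.sum_congr rfl
  intro i hi
  split_ifs <;> simp

lemma badCol_wsum {P1 : Finset C} (N : V → Finset V) (hN : ∀ u v, u ∈ N v ↔ v ∈ N u)
    (v : V) (Y : Finset P1) (c : V → P1) (u : V) (hu : 0 < (N u).card) :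
    ((badCol N v Y c u).card : ℝ) ≤ 4 * wsum N u (N v)ᶜ Y c := by
  have h := badCol_card N hN v Y c u
  have h' : ((badCol N v Y c u).card : ℝ) * (N u).card ≤
      4 * ((∑ u' ∈ (N v)ᶜ, if c u' ∈ Y then cdg N u u' else 0 : ℕ) : ℝ) := by exact_mod_cast h
  rw [wsum_eq]
  have hu' : (0:ℝ) < (N u).card := by exact_mod_cast hu
  rw [← mul_div_assoc, le_div_iff₀ hu']
  refine h'.trans (le_of_eq ?_)
  congr 2
  apply Finset.sum_congr rfl
  intros
  congr

lemma wsum_tail [Nonempty P] (N : V → Finset V) (hN : ∀ u v, u ∈ N v ↔ v ∈ N u) (d : ℕ)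
    (hd : ∀ v, (N v).card ≤ d) (u : V) (S : Finset V) (Y : Finset P) (ν : ℝ)
    (hν : ν ≤ d * (Y.card / Fintype.card P)) :
    Pr (fun c : V → P => (1 + 2 * (1/400)) * (d * (Y.card / Fintype.card P)) ≤ wsum N u S Y c) ≤
      Real.exp (-((1/400:ℝ)^2/(1+1/400) * ν)) := by
  have h := chernoff_upper (P := P) S (fun u' => (cdg N u u' : ℝ) / (N u).card)
    (fun _ _ => by positivity)
    (fun u' _ => by
      apply div_le_one_of_le₀ _ (by positivity)
      exact_mod_cast Finset.card_le_card Finset.inter_subset_left)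
    (fun _ => Y) (d * (Y.card / Fintype.card P)) (1/400) (by norm_num)
    (by
      rw [← Finset.sum_mul]
      apply mul_le_mul_of_nonneg_right _ (by positivity)
      rw [← Finset.sum_div]
      apply div_le_of_le_mul₀ (by positivity) (by positivity)
      have h1 : ∑ i ∈ S, cdg N u i ≤ d * (N u).card := by
        calc _ ≤ ∑ i, cdg N u i := Finset.sum_le_sum_of_subset (Finset.subset_univ _)
          _ = _ := cdg_sum N hN u
          _ ≤ ∑ w ∈ N u, d := Finset.sum_le_sum fun w _ => hd w
          _ = _ := by rw [Finset.sum_const, smul_eq_mul, mul_comm]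
      exact_mod_cast h1)
  refine le_trans h ?_
  apply Real.exp_le_exp.mpr
  have := mul_le_mul_of_nonneg_left hν (by norm_num : (0:ℝ) ≤ (1/400:ℝ)^2/(1+1/400))
  linarith

lemma vertex_bound {P1 : Finset C} [Nonempty P1] (𝒢 : SimpleGraph C) (N : V → Finset V)
    (hN : ∀ u v, u ∈ N v ↔ v ∈ N u)
    (side : V → Bool) (hside : ∀ u v, u ∈ N v → side u ≠ side v)
    (c2 : V → C) (hc2 : ∀ v, c2 v ∉ P1) (d n : ℕ) (hd0 : 0 < d) (hn : Fintype.card C = n)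
    (hd1 : ∀ v, (N v).card ≤ d) (hd2 : ∀ v, d ≤ 2 * (N v).card)
    (hm : (2388/100 : ℝ) * d ≤ P1.card)
    (hBd : ∀ v, 4 * (Bd N c2 v).card ≤ (N v).card)
    (D0 : ℝ) (hD0 : 0 < D0) (hY : ∀ x, D0 ≤ ((Yx 𝒢 P1 x).card : ℝ))
    (τ ν : ℝ) (hτ : τ ≤ 52/100 * (d/2 * (D0 / P1.card)))
    (hν1 : ν ≤ 12/100 * (d/2 * (D0 / P1.card)))
    (hν2 : ν ≤ d/2 * ((d/2 * (D0 / P1.card)) / P1.card)) (v : V) :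
    Pr (fun c : V → P1 => ((kept 𝒢 N (col N c2 c) v).card : ℝ) < τ) ≤
      (d * n + 4) * Real.exp (-((1/400:ℝ)^2/(1+1/400) * ν)) := by
  have hdR : (0:ℝ) < d := by exact_mod_cast hd0
  have hcP : (Fintype.card P1 : ℝ) = P1.card := by rw [Fintype.card_coe]
  obtain ⟨m, hmd⟩ : ∃ m : ℝ, m = P1.card := ⟨_, rfl⟩
  rw [← hmd] at hm hτ hν1 hν2 hcP
  have hm0 : 0 < m := by linarith
  obtain ⟨E, hE⟩ : ∃ E : ℝ, E = Real.exp (-((1/400:ℝ)^2/(1+1/400) * ν)) := ⟨_, rfl⟩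
  have hE0 : 0 ≤ E := by rw [hE]; positivity
  let F3 : (V → P1) → Prop := fun c => ∃ u ∈ N v, ∃ x ∈ (univ : Finset C),
    (1 + 2 * (1/400)) * (d * ((Yx 𝒢 P1 x).card / Fintype.card P1)) ≤ wsum N u (N v)ᶜ (Yx 𝒢 P1 x) c
  have hmu : ∀ x, d/2 * (D0 / m) ≤ d/2 * (((Yx 𝒢 P1 x).card : ℝ) / m) := by
    intro x
    have := hY x
    gcongr
  have hF3 : Pr F3 ≤ d * n * E := by
    have h1 : ∀ u ∈ N v, Pr (fun c : V → P1 => ∃ x ∈ (univ : Finset C),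
      (1 + 2 * (1/400)) * (d * ((Yx 𝒢 P1 x).card / Fintype.card P1)) ≤ wsum N u (N v)ᶜ (Yx 𝒢 P1 x) c)
        ≤ n * E := by
      intro u _
      have := Pr_exists (V := V) (P := P1) (univ : Finset C) (fun x c =>
        (1 + 2 * (1/400)) * (d * ((Yx 𝒢 P1 x).card / Fintype.card P1)) ≤ wsum N u (N v)ᶜ (Yx 𝒢 P1 x) c) E
        (fun x _ => by
          rw [hE]
          apply wsum_tail N hN d hd1
          rw [hcP]
          have h1 := hmu x
          have h2 : 0 ≤ d/2 * (D0 / m) := by positivity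
          have h3 : d * (((Yx 𝒢 P1 x).card : ℝ) / m) = 2 * (d/2 * (((Yx 𝒢 P1 x).card : ℝ) / m)) := by ring
          rw [h3]
          linarith)
      rwa [Finset.card_univ, hn] at this
    have h2 := Pr_exists (V := V) (P := P1) (N v) _ _ h1
    refine h2.trans ?_
    have : ((N v).card : ℝ) ≤ d := by exact_mod_cast hd1 v
    rw [mul_assoc]
    apply mul_le_mul_of_nonneg_right this (by positivity)
  have hmain : Pr (fun c : V → P1 => ((kept 𝒢 N (col N c2 c) v).card : ℝ) < τ ∧ ¬ F3 c) ≤ 4 * E := by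
    apply Pr_cond (N v)
    intro c
    have hdep : ∀ c' : V → P1, F3 ((N v).piecewise c' c) ↔ F3 c := by
      intro c'
      have : ∀ u x, wsum N u (N v)ᶜ (Yx 𝒢 P1 x) ((N v).piecewise c' c) =
          wsum N u (N v)ᶜ (Yx 𝒢 P1 x) c := by
        intro u x
        apply wsum_dep
        intro i hi
        rw [Finset.mem_compl] at hi
        simp [hi]
      simp only [F3, this]
    by_cases hF : F3 c
    · have h0 : Pr (fun c' : V → P1 => ((kept 𝒢 N (col N c2 ((N v).piecewise c' c)) v).card : ℝ) < τ ∧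
        ¬ F3 ((N v).piecewise c' c)) ≤ Pr (fun _ : V → P1 => False) :=
        Pr_mono (fun c' h => h.2 ((hdep c').mpr hF))
      refine h0.trans ?_
      rw [Pr_false]; positivity
    · obtain ⟨x, hx⟩ : ∃ x, x = col N c2 c v := ⟨_, rfl⟩
      obtain ⟨Q, hQ⟩ : ∃ Q, Q = (if isS N c v then Bd N c2 v else Bd N c v) := ⟨_, rfl⟩
      have hQc : 4 * Q.card ≤ (N v).card := by
        rw [hQ]
        split_ifs with hs
        · exact hBd v
        · unfold isS at hs; omega
      have hQs : Q ⊆ N v := by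
        rw [hQ]
        split_ifs <;> exact Bd_sub N _ v
      have hNv2 : (d:ℝ) ≤ 2 * (N v).card := by exact_mod_cast hd2 v
      have hNv1 : ((N v).card : ℝ) ≤ d := by exact_mod_cast hd1 v
      have hYx : 0 < ((Yx 𝒢 P1 x).card : ℝ) := lt_of_lt_of_le hD0 (hY x)
      have hmu1 : d/2 * (D0 / m) ≤ (N v).card * (((Yx 𝒢 P1 x).card : ℝ) / m) := by
        refine (hmu x).trans ?_
        apply mul_le_mul_of_nonneg_right _ (by positivity)
        linarith
      have ht := local_tail (Yx 𝒢 P1 x) (badCol N v (Yx 𝒢 P1 x) c) (N v) (N v \ Q)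
        Finset.sdiff_subset
        (by
          have h1 := Finset.card_sdiff_add_card_eq_card hQs
          have h2 : ((N v \ Q).card : ℝ) + Q.card = (N v).card := by exact_mod_cast h1
          have h3 : 4 * (Q.card : ℝ) ≤ (N v).card := by exact_mod_cast hQc
          linarith)
        (by rw [hcP]; linarith)
        (by
          intro u hu
          have huN : u ∈ N v := (Finset.mem_sdiff.mp hu).1
          have hpos : 0 < (N u).card := by have := hd2 u; omega
          have h1 := badCol_wsum N hN v (Yx 𝒢 P1 x) c u hpos
          have h2 : wsum N u (N v)ᶜ (Yx 𝒢 P1 x) c <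
            (1 + 2 * (1/400)) * (d * ((Yx 𝒢 P1 x).card / Fintype.card P1)) := by
            by_contra hcon
            exact hF ⟨u, huN, x, mem_univ _, not_lt.mp hcon⟩
          rw [hcP] at h2
          have h3 : d * (((Yx 𝒢 P1 x).card : ℝ) / m) ≤ (100/2388) * (Yx 𝒢 P1 x).card := by
            rw [← mul_div_assoc, div_le_iff₀ hm0]
            nlinarith
          linarith)
        ((N v).card * ((Yx 𝒢 P1 x).card / Fintype.card P1)) ν rfl
        (by rw [hcP]; exact lt_of_lt_of_le (by positivity) hmu1)
        (by rw [hcP]; linarith)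
        (by
          rw [hcP]
          refine hν2.trans ?_
          have : (d:ℝ)/2 ≤ (N v).card := by linarith
          gcongr
          )
      rw [← hE] at ht
      refine le_trans (Pr_mono ?_) ht
      rintro c' ⟨h1, -⟩
      have h2 := Finset.card_le_card (good_sub_kept (P1 := P1) 𝒢 N hN side hside c2 hc2 v c c')
      rw [← hx, ← hQ] at h2
      have h3 : ((goodSet (Yx 𝒢 P1 x) (badCol N v (Yx 𝒢 P1 x) c) (N v) (N v \ Q) c').card : ℝ) ≤
        (kept 𝒢 N (col N c2 ((N v).piecewise c' c)) v).card := by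
        refine le_trans ?_ (Nat.cast_le.mpr h2)
        apply le_of_eq
        congr
      rw [hcP]
      linarith
  have hfin : Pr (fun c : V → P1 => ((kept 𝒢 N (col N c2 c) v).card : ℝ) < τ) ≤
     Pr (fun c : V → P1 => F3 c ∨ (((kept 𝒢 N (col N c2 c) v).card : ℝ) < τ ∧ ¬ F3 c)) :=
    Pr_mono (fun c h => by tauto)
  rw [← hE]
  have := hfin.trans (Pr_or _ _)
  linarith

end Vtx

section Dep
open Finset
open scoped Classical
set_option linter.unusedSectionVars false
variable {V C P : Type} [Fintype V] [Fintype C] [Fintype P]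

noncomputable def bsq (B : V → Finset V) (v : V) : Finset V := (B v).biUnion B

lemma mem_bsq (B : V → Finset V) (v x : V) : x ∈ bsq B v ↔ ∃ w ∈ B v, x ∈ B w := by
  unfold bsq; rw [Finset.mem_biUnion]

lemma bsq_symm (B : V → Finset V) (hB : ∀ u v, u ∈ B v ↔ v ∈ B u) (u v : V) :
    u ∈ bsq B v ↔ v ∈ bsq B u := by
  rw [mem_bsq, mem_bsq]
  constructor
  · rintro ⟨w, h1, h2⟩; exact ⟨w, (hB _ _).mp h2, (hB _ _).mp h1⟩
  · rintro ⟨w, h1, h2⟩; exact ⟨w, (hB _ _).mp h2, (hB _ _).mp h1⟩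

lemma bsq_card (B : V → Finset V) (k : ℕ) (hB : ∀ v, (B v).card ≤ k) (v : V) :
    (bsq B v).card ≤ k ^ 2 := by
  unfold bsq
  refine (Finset.card_biUnion_le_card_mul _ _ k (fun w _ => hB w)).trans ?_
  rw [pow_two]
  exact Nat.mul_le_mul_right _ (hB v)

noncomputable def b1 (N : V → Finset V) (v : V) : Finset V := insert v (N v)

lemma mem_b1 (N : V → Finset V) (v x : V) : x ∈ b1 N v ↔ x = v ∨ x ∈ N v := by
  unfold b1; rw [Finset.mem_insert]

lemma b1_symm (N : V → Finset V) (hN : ∀ u v, u ∈ N v ↔ v ∈ N u) (u v : V) :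
    u ∈ b1 N v ↔ v ∈ b1 N u := by
  rw [mem_b1, mem_b1, hN u v, eq_comm]

lemma self_b2 (N : V → Finset V) (v : V) : v ∈ bsq (b1 N) v :=
  (mem_bsq _ _ _).mpr ⟨v, (mem_b1 _ _ _).mpr (Or.inl rfl), (mem_b1 _ _ _).mpr (Or.inl rfl)⟩

lemma nb_b2 (N : V → Finset V) (v u : V) (h : u ∈ N v) : u ∈ bsq (b1 N) v :=
  (mem_bsq _ _ _).mpr ⟨v, (mem_b1 _ _ _).mpr (Or.inl rfl), (mem_b1 _ _ _).mpr (Or.inr h)⟩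

lemma nb2_b2 (N : V → Finset V) (v u w : V) (h : u ∈ N v) (h' : w ∈ N u) : w ∈ bsq (b1 N) v :=
  (mem_bsq _ _ _).mpr ⟨u, (mem_b1 _ _ _).mpr (Or.inr h), (mem_b1 _ _ _).mpr (Or.inr h')⟩

lemma Bd_dep {γ : Type} (N : V → Finset V) (c c' : V → γ) (v : V)
    (h : ∀ i ∈ bsq (b1 N) v, c i = c' i) : Bd N c v = Bd N c' v := by
  ext u
  rw [mem_Bd, mem_Bd]
  apply and_congr_right
  intro hu
  apply exists_congr
  intro v'
  apply and_congr_right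
  intro hv'
  rw [h v (self_b2 N v), h v' (nb2_b2 N v u v' hu hv')]

lemma col_dep {P1 : Finset C} (N : V → Finset V) (c2 : V → C) (c c' : V → P1) (v : V)
    (h : ∀ i ∈ bsq (b1 N) v, c i = c' i) : col N c2 c v = col N c2 c' v := by
  unfold col isS
  rw [Bd_dep N c c' v h, h v (self_b2 N v)]

lemma mem_kept (𝒢 : SimpleGraph C) (N : V → Finset V) (χ : V → C) (v u : V) :
    u ∈ kept 𝒢 N χ v ↔ u ∈ N v ∧ 𝒢.Adj (χ v) (χ u) ∧ (∀ v' ∈ N u, v' ≠ v → χ v' ≠ χ v) ∧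
    ∀ u' ∈ N v, u' ≠ u → χ u' ≠ χ u := by
  unfold kept; rw [Finset.mem_filter]

lemma kept_dep (𝒢 : SimpleGraph C) (N : V → Finset V) (χ χ' : V → C) (v : V)
    (h : ∀ i ∈ bsq (b1 N) v, χ i = χ' i) : kept 𝒢 N χ v = kept 𝒢 N χ' v := by
  ext u
  rw [mem_kept, mem_kept]
  apply and_congr_right
  intro hu
  rw [h v (self_b2 N v), h u (nb_b2 N v u hu)]
  apply and_congr_right
  intro _
  apply and_congr
  · apply forall_congr'; intro v'
    apply forall_congr'; intro hv'
    rw [h v' (nb2_b2 N v u v' hu hv')]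
  · apply forall_congr'; intro v'
    apply forall_congr'; intro hv'
    rw [h v' (nb_b2 N v v' hv')]

lemma core {P1 : Finset C} [Nonempty P1] (𝒢 : SimpleGraph C) (N : V → Finset V)
    (hN : ∀ u v, u ∈ N v ↔ v ∈ N u)
    (c2 : V → C) (d : ℕ) (hd1 : ∀ v, (N v).card ≤ d) (τ p : ℝ) (hp0 : 0 ≤ p)
    (hp : 4 * p * ((d+1:ℕ)^8 : ℕ) ≤ 1)
    (hA : ∀ v, Pr (fun c : V → P1 => ((kept 𝒢 N (col N c2 c) v).card : ℝ) < τ) ≤ p) :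
    ∃ χ : V → C, ∀ v, τ ≤ ((kept 𝒢 N χ v).card : ℝ) := by
  have hK1 : ∀ v, (b1 N v).card ≤ d + 1 := fun v =>
    (Finset.card_insert_le _ _).trans (Nat.succ_le_succ (hd1 v))
  have hsym := bsq_symm _ (bsq_symm _ (b1_symm N hN))
  have h1 : (1:ℝ) ≤ ((d+1:ℕ)^8 : ℕ) := by
    exact_mod_cast Nat.one_le_pow _ _ (Nat.succ_pos d)
  obtain ⟨c, hc⟩ := lll_prod (V := V) (P := P1)
    (fun v c => ((kept 𝒢 N (col N c2 c) v).card : ℝ) < τ)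
    (bsq (bsq (b1 N))) (bsq (bsq (bsq (b1 N)))) p ((d+1)^8) hp0
    (by nlinarith)
    (by
      intro v c c' h
      have : kept 𝒢 N (col N c2 c) v = kept 𝒢 N (col N c2 c') v := by
        apply kept_dep
        intro i hi
        apply col_dep
        intro j hj
        exact h j ((mem_bsq _ _ _).mpr ⟨i, hi, hj⟩)
      simp only [this])
    (by
      intro v w hw
      rw [Finset.disjoint_left]
      intro x hx hx'
      exact hw ((mem_bsq _ _ _).mpr ⟨x, hx, (hsym _ _).mp hx'⟩))
    (by
      intro v
      have := bsq_card _ _ (bsq_card _ _ (bsq_card _ _ hK1)) v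
      calc _ ≤ _ := this
        _ = _ := by ring)
    hp hA
  exact ⟨col N c2 c, fun v => not_lt.mp (hc v)⟩

lemma bip_exists (G : SimpleGraph V) (d : ℕ) (hG : ∀ v, (univ.filter (fun u => G.Adj v u)).card = d) :
    ∃ (N : V → Finset V) (side : V → Bool), (∀ u v, u ∈ N v ↔ v ∈ N u) ∧
      (∀ u v, u ∈ N v → side u ≠ side v) ∧ (∀ u v, u ∈ N v → G.Adj v u) ∧
      (∀ v, (N v).card ≤ d) ∧ (∀ v, d ≤ 2 * (N v).card) := by
  obtain ⟨c, hc⟩ := local_opt (V := V) Bool (fun a b => if G.Adj a b then 1 else 0)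
    (fun a b => by simp [G.adj_comm]) (fun a => by simp)
  refine ⟨fun v => univ.filter (fun u => G.Adj v u ∧ c u ≠ c v), c, ?_, ?_, ?_, ?_, ?_⟩
  · intro u v
    simp [G.adj_comm, eq_comm]
  · intro u v h
    exact (Finset.mem_filter.mp h).2.2
  · intro u v h
    exact (Finset.mem_filter.mp h).2.1
  · intro v
    rw [← hG v]
    apply Finset.card_le_card
    intro u hu
    simp only [Finset.mem_filter] at hu ⊢
    exact ⟨hu.1, hu.2.1⟩
  · intro v
    have h := hc v
    have e1 : (∑ v', if G.Adj v v' then 1 else 0) = d := by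
      rw [← hG v, Finset.card_filter]
    have e2 : (∑ v', if c v' = c v then (if G.Adj v v' then 1 else 0) else 0) =
        ((univ.filter (fun u => G.Adj v u)).filter (fun u => c u = c v)).card := by
      rw [Finset.filter_filter, Finset.card_filter]
      apply Finset.sum_congr rfl
      intro u _
      by_cases h1 : c u = c v <;> by_cases h2 : G.Adj v u <;> simp [h1, h2]
    have e3 := Finset.card_filter_add_card_filter_not (s := univ.filter (fun u => G.Adj v u))
      (fun u => c u = c v)
    rw [hG v] at e3
    have e4 : ((univ.filter (fun u => G.Adj v u)).filter (fun u => ¬ c u = c v)).card =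
      (univ.filter (fun u => G.Adj v u ∧ c u ≠ c v)).card := by
      rw [Finset.filter_filter]
    have e5 : (∑ v', if c v' = c v then (if G.Adj v v' then 1 else 0) else 0) =
      ∑ v', @ite _ _ (Classical.propDecidable (c v' = c v)) (if G.Adj v v' then 1 else 0) 0 := by
      apply Finset.sum_congr rfl
      intros
      congr
    have h' : 2 * (∑ v', if c v' = c v then (if G.Adj v v' then 1 else 0) else 0) ≤ d := by
      rw [e5, ← e1]
      rw [Fintype.card_bool] at h
      exact h
    show d ≤ 2 * (univ.filter (fun u => G.Adj v u ∧ c u ≠ c v)).card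
    omega

lemma c2_exists (Q : Finset C) (N : V → Finset V) (hN : ∀ u v, u ∈ N v ↔ v ∈ N u) (d : ℕ)
    (hd0 : 0 < d) (hd1 : ∀ v, (N v).card ≤ d) (hQ : 4 * d ≤ Q.card) :
    ∃ c2 : V → C, (∀ v, c2 v ∈ Q) ∧ ∀ v, 4 * (Bd N c2 v).card ≤ (N v).card := by
  have hne : Nonempty Q := by
    obtain ⟨x, hx⟩ := Finset.card_pos.mp (by omega : 0 < Q.card)
    exact ⟨⟨x, hx⟩⟩
  obtain ⟨c, hc⟩ := local_opt (V := V) Q (fun a b => if a = b then 0 else cdg N a b)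
    (fun a b => by simp only [cdg, Finset.inter_comm (N a), eq_comm]) (fun a => by simp)
  refine ⟨fun v => (c v : C), fun v => (c v).2, fun v => ?_⟩
  have h := hc v
  have h1 : (∑ v', if v = v' then 0 else cdg N v v') ≤ d * (N v).card := by
    calc _ ≤ ∑ i, cdg N v i := Finset.sum_le_sum (fun i _ => by split_ifs <;> simp)
      _ = _ := cdg_sum N hN v
      _ ≤ ∑ w ∈ N v, d := Finset.sum_le_sum fun w _ => hd1 w
      _ = _ := by rw [Finset.sum_const, smul_eq_mul, mul_comm]
  have h2 : (Bd N (fun v => (c v : C)) v).card ≤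
      ∑ v', @ite _ (c v' = c v) (Classical.propDecidable _) (if v = v' then 0 else cdg N v v') 0 := by
    have : Bd N (fun v => (c v : C)) v ⊆
        (univ.filter (fun v' => c v' = c v ∧ v ≠ v')).biUnion (fun v' => N v ∩ N v') := by
      intro u hu
      rw [mem_Bd] at hu
      obtain ⟨hu, v', a1, a2, a3⟩ := hu
      rw [Finset.mem_biUnion]
      refine ⟨v', ?_, Finset.mem_inter.mpr ⟨hu, (hN _ _).mp a1⟩⟩
      simp only [Finset.mem_filter, Finset.mem_univ, true_and]
      exact ⟨Subtype.ext a3, a2.symm⟩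
    refine (Finset.card_le_card this).trans (Finset.card_biUnion_le.trans ?_)
    rw [Finset.sum_filter]
    apply Finset.sum_le_sum
    intro i _
    by_cases e1 : c i = c v <;> by_cases e2 : v = i <;> simp [e1, e2, cdg]
  have h3 : Q.card * (Bd N (fun v => (c v : C)) v).card ≤ d * (N v).card := by
    refine le_trans (Nat.mul_le_mul_left _ h2) (le_trans ?_ h1)
    rw [Fintype.card_coe] at h
    convert h
  have h4 : d * (4 * (Bd N (fun v => (c v : C)) v).card) ≤ d * (N v).card := by
    refine le_trans ?_ h3
    rw [← mul_assoc, mul_comm d 4]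
    exact Nat.mul_le_mul_right _ hQ
  exact Nat.le_of_mul_le_mul_left h4 hd0

end Dep

section Fin
open Finset
open scoped Classical
set_option linter.unusedSectionVars false
variable {V C : Type} [Fintype V] [Fintype C]

lemma d0_exists (ε b : ℝ) (hε : 0 < ε) (hb : 0 < b) (α : ℕ) :
    ∃ d₀ : ℕ, 1 ≤ d₀ ∧ ∀ d : ℕ, d₀ ≤ d → ∀ δ : ℝ, (d:ℝ)^ε < δ →
      4 * ((d * (α * d : ℕ) + 4) * Real.exp (-(b * δ))) * ((d+1:ℕ)^8 : ℕ) ≤ 1 := by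
  have h1 := tendsto_rpow_mul_exp_neg_mul_atTop_nhds_zero (10/ε) b hb
  have h2 := h1.comp ((tendsto_rpow_atTop hε).comp tendsto_natCast_atTop_atTop)
  have hA : (0:ℝ) < 1 / (4 * (α + 4) * 2^8) := by positivity
  have h3 := (h2.eventually (gt_mem_nhds hA)).and (Filter.eventually_ge_atTop 1)
  obtain ⟨d₀, hd₀⟩ := Filter.eventually_atTop.mp h3
  refine ⟨max d₀ 1, le_max_right _ _, fun d hd δ hδ => ?_⟩
  obtain ⟨h4, h5⟩ := hd₀ d (le_trans (le_max_left _ _) hd)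
  simp only [Function.comp] at h4
  have hd1 : (1:ℝ) ≤ d := by exact_mod_cast h5
  have e1 : ((d:ℝ)^ε)^(10/ε) = (d:ℝ)^10 := by
    rw [← Real.rpow_mul (by positivity), mul_div_cancel₀ _ hε.ne']
    exact_mod_cast Real.rpow_natCast (d:ℝ) 10
  rw [e1] at h4
  have e2 : Real.exp (-(b * δ)) ≤ Real.exp (-b * (d:ℝ)^ε) := by
    apply Real.exp_le_exp.mpr
    nlinarith
  obtain ⟨E, hE⟩ : ∃ E, E = Real.exp (-b * (d:ℝ)^ε) := ⟨_, rfl⟩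
  rw [← hE] at e2 h4
  have hE0 : 0 ≤ E := by rw [hE]; positivity
  have e3 : ((d:ℝ) * (α * d : ℕ) + 4) ≤ (α + 4) * d^2 := by
    push_cast
    nlinarith
  have e4 : (((d+1:ℕ)^8 : ℕ) : ℝ) ≤ 2^8 * (d:ℝ)^8 := by
    push_cast
    rw [← mul_pow]
    apply pow_le_pow_left₀ (by positivity)
    linarith
  calc _ ≤ 4 * (((α + 4) * d^2) * E) * (2^8 * (d:ℝ)^8) := by
        gcongr
    _ = (4 * (α + 4) * 2^8) * ((d:ℝ)^10 * E) := by ring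
    _ ≤ (4 * (α + 4) * 2^8) * (1 / (4 * (α + 4) * 2^8)) := by gcongr
    _ = 1 := by field_simp

lemma Yx_card (𝒢 : SimpleGraph C) (P1 : Finset C) (x : C) :
    (Yx 𝒢 P1 x).card = (P1.filter (fun y => 𝒢.Adj x y)).card := by
  unfold Yx
  apply Finset.card_bij (fun (y : P1) _ => (y : C))
  · intro a ha
    rw [Finset.mem_filter] at ha ⊢
    exact ⟨a.2, ha.2⟩
  · intro a _ b _ h
    exact Subtype.ext h
  · intro b hb
    rw [Finset.mem_filter] at hb
    exact ⟨⟨b, hb.1⟩, by rw [Finset.mem_filter]; exact ⟨mem_univ _, hb.2⟩, rfl⟩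

lemma deg_eq (G : SimpleGraph V) (v : V) : deg G v = (univ.filter (fun u => G.Adj v u)).card := by
  unfold deg
  rw [← Set.ncard_coe_finset]
  congr 1
  ext u
  simp

lemma chi_exists (G : SimpleGraph V) (d α : ℕ) (hd : 1 ≤ d) (hα : 32 ≤ α) (hG : RegularDeg G d)
    (𝒢 : SimpleGraph C) (hC : Fintype.card C = α * d) (δ : ℝ) (hδ0 : 0 < δ) (hδ : ∀ x, δ ≤ deg 𝒢 x)
    (hbig : 4 * ((d * (α * d : ℕ) + 4) *
      Real.exp (-(((1/400:ℝ)^2/(1+1/400) * (1/(100*α^2))) * δ))) * ((d+1:ℕ)^8 : ℕ) ≤ 1) :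
    ∃ (N : V → Finset V) (χ : V → C), (∀ u v, u ∈ N v ↔ v ∈ N u) ∧ (∀ u v, u ∈ N v → G.Adj v u) ∧
      ∀ v, δ / (4 * α) ≤ ((kept 𝒢 N χ v).card : ℝ) := by
  obtain ⟨N, side, hN, hside, hNG, hd1, hd2⟩ := bip_exists G d (fun v => by rw [← deg_eq]; exact hG v)
  have hdR : (1:ℝ) ≤ d := by exact_mod_cast hd
  have hαR : (32:ℝ) ≤ α := by exact_mod_cast hα
  have ha0 : (0:ℝ) < α := by linarith
  obtain ⟨κ, hκ⟩ : ∃ κ : ℝ, κ = (1/400:ℝ)^2/(1+1/400) := ⟨_, rfl⟩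
  have hκ0 : 0 < κ := by rw [hκ]; norm_num
  obtain ⟨ν, hν⟩ : ∃ ν : ℝ, ν = δ / (100 * α^2) := ⟨_, rfl⟩
  have hν4 : ν ≤ δ / 4 := by
    rw [hν]
    apply div_le_div_of_nonneg_left hδ0.le (by norm_num)
    nlinarith
  have eν : ((1/400:ℝ)^2/(1+1/400) * (1/(100*α^2))) * δ = (1/400:ℝ)^2/(1+1/400) * ν := by
    rw [hν]; ring
  rw [eν] at hbig
  obtain ⟨E, hE⟩ : ∃ E, E = Real.exp (-((1/400:ℝ)^2/(1+1/400) * ν)) := ⟨_, rfl⟩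
  have hE0 : 0 ≤ E := by rw [hE]; positivity
  have hpow : (1:ℝ) ≤ ((d+1:ℕ)^8 : ℕ) := by
    exact_mod_cast Nat.one_le_pow _ _ (Nat.succ_pos d)
  rw [← hE] at hbig
  have hnpos : 0 < α * d := by positivity
  have hne : Nonempty C := Fintype.card_pos_iff.mp (by omega)
  have hδn : δ ≤ ((α * d : ℕ) : ℝ) := by
    obtain ⟨x⟩ := hne
    refine (hδ x).trans ?_
    rw [deg_eq, ← hC]
    exact_mod_cast Finset.card_le_univ _
  obtain ⟨n, hn⟩ : ∃ n : ℕ, n = α * d := ⟨_, rfl⟩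
  have hnR : (n:ℝ) = α * d := by rw [hn]; push_cast; ring
  rw [← hn] at hC hδn hbig
  obtain ⟨P1, q1, q2, q3, q4⟩ := palette n hC 𝒢 δ hδ0.le hδn
    (fun x => by rw [← deg_eq]; exact hδ x)
    (by
      have h1 : Real.exp (-((1/400:ℝ)^2/(1+1/400) * (δ/4))) ≤ E := by
        rw [hE]
        apply Real.exp_le_exp.mpr
        rw [← hκ]
        have := mul_le_mul_of_nonneg_left hν4 hκ0.le
        linarith
      have h2 : (n:ℝ) + 2 ≤ d * n + 4 := by
        have : (0:ℝ) ≤ n := by positivity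
        nlinarith
      have h3 : ((n:ℝ) + 2) * Real.exp (-((1/400:ℝ)^2/(1+1/400) * (δ/4))) ≤ (d * n + 4) * E := by
        gcongr
      have h4 : 0 ≤ (d * n + 4) * E := by positivity
      nlinarith)
  have hbn : (32:ℝ) * d ≤ n := by rw [hnR]; nlinarith
  have hm : (2388/100 : ℝ) * d ≤ P1.card := by linarith
  have hm0 : (0:ℝ) < P1.card := by linarith
  have hneP : Nonempty P1 := by
    obtain ⟨x, hx⟩ := Finset.card_pos.mp (by exact_mod_cast hm0 : 0 < P1.card)
    exact ⟨⟨x, hx⟩⟩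
  obtain ⟨c2, hc2, hBd⟩ := c2_exists P1ᶜ N hN d hd hd1 (by
    have : (4:ℝ) * d ≤ (P1ᶜ.card : ℝ) := by linarith
    exact_mod_cast this)
  have hc2' : ∀ v, c2 v ∉ P1 := fun v => Finset.mem_compl.mp (hc2 v)
  have hmu : 199/402 * (δ / α) ≤ d/2 * (199/200*(3/4)*δ / P1.card) := by
    have : d/2 * (199/200*(3/4)*δ / (201/200*(3/4)*n)) ≤ d/2 * (199/200*(3/4)*δ / P1.card) := by
      gcongr
    refine le_trans (le_of_eq ?_) this
    rw [hnR]
    field_simp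
    norm_num
  have hda : 0 < δ / α := by positivity
  have hvb := vertex_bound 𝒢 N hN side hside c2 hc2' d n hd hC hd1 hd2 hm hBd
    (199/200*(3/4)*δ) (by positivity) (fun x => by rw [Yx_card]; exact q4 x)
    (δ / (4 * α)) ν
    (by
      have : δ / (4 * α) = 1/4 * (δ / α) := by field_simp
      rw [this]; linarith)
    (by
      have : ν ≤ 1/100 * (δ / α) := by
        rw [hν]
        have : δ / (100 * α^2) = 1/100 * (δ / α) * (1 / α) := by field_simp
        rw [this]
        have h1 : 1 / (α:ℝ) ≤ 1 := by
          rw [div_le_one ha0]; linarith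
        have : 0 ≤ 1/100 * (δ / α) := by positivity
        nlinarith
      linarith)
    (by
      have h1 : d/2 * ((199/402 * (δ / α)) / (201/200*(3/4)*n)) ≤
          d/2 * ((d/2 * (199/200*(3/4)*δ / P1.card)) / P1.card) := by
        gcongr
      refine le_trans ?_ h1
      rw [hν, hnR]
      have e1 : (d:ℝ)/2 * ((199/402 * (δ / α)) / (201/200*(3/4)*(α * d))) =
        (199/402 / (2 * (201/200*(3/4)))) * (δ / α^2) := by
        field_simp
      have e2 : δ / (100 * (α:ℝ)^2) = 1/100 * (δ / α^2) := by field_simp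
      rw [e1, e2]
      apply mul_le_mul_of_nonneg_right (by norm_num) (by positivity))
  rw [← hE] at hvb
  obtain ⟨χ, hχ⟩ := core 𝒢 N hN c2 d hd1 (δ / (4 * α)) ((d * n + 4) * E) (by positivity) hbig hvb
  exact ⟨N, χ, hN, hNG, hχ⟩

/-- the final subgraph -/
def Hg (𝒢 : SimpleGraph C) (N : V → Finset V) (hN : ∀ u v, u ∈ N v ↔ v ∈ N u) (χ : V → C) :
    SimpleGraph V where
  Adj v u := u ∈ N v ∧ 𝒢.Adj (χ v) (χ u) ∧ (∀ v' ∈ N u, v' ≠ v → χ v' ≠ χ v) ∧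
    ∀ u' ∈ N v, u' ≠ u → χ u' ≠ χ u
  symm := ⟨fun v u h => ⟨(hN _ _).mp h.1, h.2.1.symm, h.2.2.2, h.2.2.1⟩⟩
  loopless := ⟨fun v h => h.2.1.ne rfl⟩

lemma Hg_deg (𝒢 : SimpleGraph C) (N : V → Finset V) (hN : ∀ u v, u ∈ N v ↔ v ∈ N u) (χ : V → C)
    (v : V) : deg (Hg 𝒢 N hN χ) v = (kept 𝒢 N χ v).card := by
  unfold deg
  rw [← Set.ncard_coe_finset]
  congr 1
  ext u
  rw [Finset.mem_coe, mem_kept]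
  rfl

lemma Hg_free (𝒢 : SimpleGraph C) (N : V → Finset V) (hN : ∀ u v, u ∈ N v ↔ v ∈ N u) (χ : V → C)
    (𝓕 : GraphFamily) (h : ∀ F ∈ 𝓕, NoLocInjHom F.2 𝒢) : FamFree (Hg 𝒢 N hN χ) 𝓕 := by
  rintro F hF ⟨f, hf⟩
  apply h F hF
  refine ⟨⟨fun a => χ (f a), fun {a b} hab => (f.map_rel hab).2.1⟩, ?_⟩
  intro v a ha b hb hab
  have h1 := f.map_rel ha
  have h2 := f.map_rel hb
  apply hf
  by_contra hne
  exact h2.2.2.2 (f a) h1.1 hne hab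

end Fin

theorem statement1 (𝓕 : GraphFamily)
    (hbip : ∀ F ∈ 𝓕, F.2.chromaticNumber = 2)
    (hforest : ∀ F ∈ 𝓕, ¬ F.2.IsAcyclic)
    (ε : ℝ) (hε : 0 < ε) (β : ℕ) (hβ : 1 ≤ β) (α : ℕ) (hα : 32 * β ≤ α) :
    ∃ (c : ℝ) (d₀ : ℕ), 0 < c ∧
      ∀ d : ℕ, d₀ ≤ d →
        ∀ (V : Type) [Fintype V] (G : SimpleGraph V), RegularDeg G d →
          ∀ 𝒢 : SimpleGraph (Fin (α * d)),
            maxDeg 𝒢 ≤ β * minDeg 𝒢 →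
            (d : ℝ) ^ ε < (minDeg 𝒢 : ℝ) →
            (∀ F ∈ 𝓕, NoLocInjHom F.2 𝒢) →
            ∃ H : SimpleGraph V, H ≤ G ∧ FamFree H 𝓕 ∧
              (∀ v : V, c * (minDeg 𝒢 : ℝ) ≤ (deg H v : ℝ)) ∧
              (∀ v : V, (minDeg 𝒢 : ℝ) / (4 * (α : ℝ)) ≤ (deg H v : ℝ)) := by
  have hα32 : 32 ≤ α := by omega
  have hαR : (0:ℝ) < α := by exact_mod_cast (by omega : 0 < α)
  obtain ⟨d₀, hd₀1, hd₀⟩ := d0_exists ε ((1/400:ℝ)^2/(1+1/400) * (1/(100*α^2))) hε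
    (by positivity) α
  refine ⟨1 / (4 * α), d₀, by positivity, ?_⟩
  intro d hd V _ G hG 𝒢 _ hδ hno
  have hδ0 : (0:ℝ) < minDeg 𝒢 := lt_of_le_of_lt (by positivity) hδ
  obtain ⟨N, χ, hN, hNG, hχ⟩ := chi_exists G d α (hd₀1.trans hd) hα32 hG 𝒢 (Fintype.card_fin _)
    (minDeg 𝒢 : ℝ) hδ0
    (fun x => by
      have : minDeg 𝒢 ≤ deg 𝒢 x := ciInf_le (OrderBot.bddBelow _) x
      exact_mod_cast this)
    (hd₀ d hd _ hδ)
  have key : ∀ v : V, (minDeg 𝒢 : ℝ) / (4 * (α : ℝ)) ≤ (deg (Hg 𝒢 N hN χ) v : ℝ) := by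
    intro v
    rw [Hg_deg]
    exact hχ v
  refine ⟨Hg 𝒢 N hN χ, fun v u h => hNG u v h.1, Hg_free 𝒢 N hN χ 𝓕 hno, fun v => ?_, key⟩
  have := key v
  rw [div_eq_inv_mul] at this
  rwa [one_div]
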